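/- arXiv:2210.13933 — 10 statements merged into one kernel-verified Lean document; each statement's English description precedes it below -/
import Mathlib

section
/- Let p be a polynomial with complex coefficients of positive degree, with factorization p = c·∏_{i=1}^{s} (t − a_i)^{m_i}, where c ≠ 0, the complex numbers a_1, …, a_s are pairwise distinct, and each m_i ≥ 1. Set q := gcd(p, p′). Then q² divides p·gcd(q, q′), and the quotient p·gcd(q, q′)/q² is associated to ∏_{i : m_i = 1} (t − a_i), the product of the linear factors of p occurring exactly once. -/
open Polynomial

/-!
If `f` and `g` are coprime, then `gcd(fg, (fg)') = gcd(f, f') · gcd(g, g')`, since `(fg)'` is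
`f' g` modulo `f` and `f g'` modulo `g`. Moreover `gcd(fⁿ, (fⁿ)') = fⁿ⁻¹` for separable `f` when
`n` is invertible. So for pairwise coprime separable `fᵢ` the operation `p ↦ gcd(p, p')` lowers each
positive exponent in `∏ fᵢ ^ mᵢ` by one, and in `p · gcd(q, q') / q²` the exponent of `fᵢ` is
`mᵢ + (mᵢ - 2) - 2 (mᵢ - 1) = 0` if `mᵢ ≥ 2`, but `1 + 0 - 0 = 1` if `mᵢ = 1`.
-/

theorem associated_mul_gcd_of_isCoprime {R : Type*} [CommRing R] [GCDMonoid R] {a b : R}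
    (h : IsCoprime a b) (c : R) : Associated (gcd (a * b) c) (gcd a c * gcd b c) := by
  have hcop : IsCoprime (gcd a c) (gcd b c) :=
    (h.of_isCoprime_of_dvd_left (gcd_dvd_left a c)).of_isCoprime_of_dvd_right (gcd_dvd_left b c)
  have gcd_dvd : gcd (a * b) c ∣ gcd a c * gcd b c :=
    calc gcd (a * b) c ∣ gcd c (a * b) := (gcd_comm' _ _).dvd
      _ ∣ gcd c a * gcd c b := gcd_mul_dvd_mul_gcd c a b
      _ ∣ gcd a c * gcd b c := ((gcd_comm' _ _).mul_mul (gcd_comm' _ _)).dvd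
  refine associated_of_dvd_dvd gcd_dvd (dvd_gcd ?_ ?_)
  · exact mul_dvd_mul (gcd_dvd_left a c) (gcd_dvd_left b c)
  · exact hcop.mul_dvd (gcd_dvd_right a c) (gcd_dvd_right b c)

theorem associated_gcd_mul_add_mul_of_isCoprime {R : Type*} [CommRing R] [GCDMonoid R] {a b : R}
    (h : IsCoprime a b) (x y : R) : Associated (gcd a (x * b + a * y)) (gcd a x) := by
  have dvd_iff {d : R} (hd : d ∣ a) : d ∣ x * b + a * y ↔ d ∣ x := by
    rw [dvd_add_left (hd.mul_right y)]
    exact ⟨(h.of_isCoprime_of_dvd_left hd).dvd_of_dvd_mul_right, fun hx => hx.mul_right b⟩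
  refine associated_of_dvd_dvd (dvd_gcd (gcd_dvd_left _ _) ?_) (dvd_gcd (gcd_dvd_left _ _) ?_)
  · exact (dvd_iff (gcd_dvd_left _ _)).1 (gcd_dvd_right _ _)
  · exact (dvd_iff (gcd_dvd_left _ _)).2 (gcd_dvd_right _ _)

theorem dvd_and_associated_div_of_associated_mul {R : Type*} [EuclideanDomain R] {a b c : R}
    (hb : b ≠ 0) (h : Associated a (b * c)) : b ∣ a ∧ Associated (a / b) c := by
  obtain ⟨d, rfl⟩ : b ∣ a := (dvd_mul_right b c).trans h.symm.dvd
  refine ⟨dvd_mul_right b d, ?_⟩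
  rw [mul_div_cancel_left₀ d hb]
  exact h.of_mul_left (Associated.refl b) hb

section GCDDerivative

variable {R : Type*} [CommRing R] [GCDMonoid R[X]]

theorem associated_gcd_derivative_mul {f g : R[X]} (h : IsCoprime f g) :
    Associated (gcd (f * g) (derivative (f * g)))
      (gcd f (derivative f) * gcd g (derivative g)) := by
  have hf : Associated (gcd f (derivative (f * g))) (gcd f (derivative f)) := by
    rw [derivative_mul]
    exact associated_gcd_mul_add_mul_of_isCoprime h _ _
  have hg : Associated (gcd g (derivative (f * g))) (gcd g (derivative g)) := by
    rw [mul_comm, derivative_mul]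
    exact associated_gcd_mul_add_mul_of_isCoprime h.symm _ _
  exact (associated_mul_gcd_of_isCoprime h _).trans (hf.mul_mul hg)

theorem associated_gcd_derivative_of_associated {f g : R[X]} (h : Associated f g) :
    Associated (gcd f (derivative f)) (gcd g (derivative g)) := by
  obtain ⟨u, rfl⟩ := h
  have hcop : IsCoprime f u := isCoprime_one_right.of_isCoprime_of_dvd_right u.isUnit.dvd
  have hu : IsUnit (gcd (u : R[X]) (derivative (u : R[X]))) :=
    isUnit_of_dvd_unit (gcd_dvd_left _ _) u.isUnit
  exact ((associated_gcd_derivative_mul hcop).trans (associated_mul_unit_left _ _ hu)).symm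

theorem associated_gcd_derivative_pow {f : R[X]} (hf : f.Separable) {n : ℕ}
    (hn : n ≠ 0 → IsUnit (n : R)) :
    Associated (gcd (f ^ n) (derivative (f ^ n))) (f ^ (n - 1)) := by
  obtain rfl | hn0 := eq_or_ne n 0
  · simp
  have hcop : IsCoprime f (C (n : R) * derivative f) :=
    (isCoprime_mul_unit_left_right (isUnit_C.2 (hn hn0)) f (derivative f)).2 hf
  have hunit : IsUnit (gcd f (C (n : R) * derivative f)) :=
    hcop.isUnit_of_dvd' (gcd_dvd_left _ _) (gcd_dvd_right _ _)
  have hpow : f ^ n = f ^ (n - 1) * f := (pow_sub_one_mul hn0 f).symm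
  have hderiv : derivative (f ^ n) = f ^ (n - 1) * (C (n : R) * derivative f) := by
    rw [derivative_pow]
    ring
  rw [hderiv, hpow]
  exact (gcd_mul_left' _ _ _).trans (associated_mul_unit_left _ _ hunit)

theorem associated_gcd_derivative_prod_pow {ι : Type*} {t : Finset ι} {f : ι → R[X]} {m : ι → ℕ}
    (hsep : ∀ i ∈ t, (f i).Separable)
    (hcop : (t : Set ι).Pairwise (Function.onFun IsCoprime f))
    (hm : ∀ i ∈ t, m i ≠ 0 → IsUnit (m i : R)) :
    Associated (gcd (∏ i ∈ t, f i ^ m i) (derivative (∏ i ∈ t, f i ^ m i)))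
      (∏ i ∈ t, f i ^ (m i - 1)) := by
  classical
  induction t using Finset.induction_on with
  | empty => simp
  | insert j t hj ih =>
    rw [Finset.forall_mem_insert] at hsep hm
    rw [Finset.prod_insert hj, Finset.prod_insert hj]
    have hcop_t : (t : Set ι).Pairwise (Function.onFun IsCoprime f) :=
      hcop.mono (Finset.coe_subset.2 (Finset.subset_insert j t))
    have hcop_j : IsCoprime (f j ^ m j) (∏ i ∈ t, f i ^ m i) :=
      IsCoprime.prod_right fun i hi =>
        (hcop (Finset.mem_insert_self j t) (Finset.mem_insert_of_mem hi)
          (ne_of_mem_of_not_mem hi hj).symm).pow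
    exact (associated_gcd_derivative_mul hcop_j).trans
      ((associated_gcd_derivative_pow hsep.1 hm.1).mul_mul (ih hsep.2 hcop_t hm.2))

end GCDDerivative

theorem prod_pow_mul_prod_pow_sub_one_sub_one {M ι : Type*} [CommMonoid M] (t : Finset ι)
    (f : ι → M) (m : ι → ℕ) :
    (∏ i ∈ t, f i ^ m i) * ∏ i ∈ t, f i ^ (m i - 1 - 1) =
      (∏ i ∈ t, f i ^ (m i - 1)) ^ 2 * ∏ i ∈ t with m i = 1, f i := by
  rw [Finset.prod_filter, ← Finset.prod_pow, ← Finset.prod_mul_distrib, ← Finset.prod_mul_distrib]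
  refine Finset.prod_congr rfl fun i _ => ?_
  obtain h | h | h : m i = 0 ∨ m i = 1 ∨ 2 ≤ m i := by omega
  · simp [h]
  · simp [h]
  · rw [if_neg (by omega), mul_one, ← pow_add, ← pow_mul]
    congr 1
    omega

theorem simple_factors_assoc_general {K ι : Type*} [Field K] [CharZero K] [GCDMonoid K[X]]
    {t : Finset ι} {f : ι → K[X]} {m : ι → ℕ}
    (hsep : ∀ i ∈ t, (f i).Separable)
    (hcop : (t : Set ι).Pairwise (Function.onFun IsCoprime f))
    {p q : K[X]} (hp : Associated p (∏ i ∈ t, f i ^ m i)) (hq : q = gcd p (derivative p)) :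
    q ^ 2 ∣ p * gcd q (derivative q) ∧
      Associated (p * gcd q (derivative q) / q ^ 2) (∏ i ∈ t with m i = 1, f i) := by
  have isUnit_cast (n : ℕ) (hn : n ≠ 0) : IsUnit (n : K) := (Nat.cast_ne_zero.2 hn).isUnit
  have hq_prod : Associated q (∏ i ∈ t, f i ^ (m i - 1)) :=
    hq ▸ (associated_gcd_derivative_of_associated hp).trans
      (associated_gcd_derivative_prod_pow hsep hcop fun i _ => isUnit_cast (m i))
  have hgcd : Associated (gcd q (derivative q)) (∏ i ∈ t, f i ^ (m i - 1 - 1)) :=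
    (associated_gcd_derivative_of_associated hq_prod).trans
      (associated_gcd_derivative_prod_pow hsep hcop fun i _ => isUnit_cast (m i - 1))
  have hq0 : q ≠ 0 := hq_prod.ne_zero_iff.2 <|
    Finset.prod_ne_zero_iff.2 fun i hi => pow_ne_zero _ (hsep i hi).ne_zero
  have key : Associated (p * gcd q (derivative q)) (q ^ 2 * ∏ i ∈ t with m i = 1, f i) := by
    refine (hp.mul_mul hgcd).trans ?_
    rw [prod_pow_mul_prod_pow_sub_one_sub_one]
    exact (hq_prod.symm.pow_pow).mul_right _
  exact dvd_and_associated_div_of_associated_mul (pow_ne_zero 2 hq0) key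

/-- For `p ∈ ℂ[t]` of positive degree with factorization
`p = c · ∏ᵢ (t - aᵢ)^{mᵢ}` (`c ≠ 0`, the `aᵢ` pairwise distinct, `mᵢ ≥ 1`), setting
`q := gcd(p, p')`, the square `q²` divides `p · gcd(q, q')` and the quotient
`p · gcd(q, q') / q²` is associated to `∏_{mᵢ = 1} (t - aᵢ)`, the product of the
linear factors of `p` occurring exactly once. -/
theorem simple_factors_assoc
    (p : Polynomial ℂ) (c : ℂ) (s : ℕ) (a : Fin s → ℂ) (m : Fin s → ℕ)
    (hdeg : 0 < p.degree) (hc : c ≠ 0) (hm : ∀ i, 1 ≤ m i)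
    (ha : Function.Injective a)
    (hfac : p = Polynomial.C c * ∏ i, (Polynomial.X - Polynomial.C (a i)) ^ m i)
    (q : Polynomial ℂ) (hq : q = gcd p (Polynomial.derivative p)) :
    q ^ 2 ∣ p * gcd q (Polynomial.derivative q) ∧
    Associated (p * gcd q (Polynomial.derivative q) / q ^ 2)
      (∏ i ∈ Finset.univ.filter (fun i => m i = 1),
        (Polynomial.X - Polynomial.C (a i))) :=
  simple_factors_assoc_general (fun _ _ => separable_X_sub_C)
    ((pairwise_coprime_X_sub_C ha).set_pairwise _)
    (hfac ▸ associated_unit_mul_left _ _ (isUnit_C.2 hc.isUnit)) hq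
end

section
/- Let p be a univariate real polynomial of positive degree and suppose that every real root of p has odd multiplicity. Then {t ∈ ℝ : p(t) ≥ 0} equals the closure (in the usual topology of ℝ) of {t ∈ ℝ : p(t) > 0}. -/
/-!
At a root `a` of odd multiplicity `m`, write `p = (X - a) ^ m * q` with `q(a) ≠ 0`. Near `a` the
sign of `q` is constant, while `(t - a) ^ m` takes the sign of `t - a`. So `p` is positive
immediately to the right of `a` if `q(a) > 0` and immediately to the left if `q(a) < 0`; either
way `a` is a limit of points where `p > 0`.
-/

open Polynomial

open Filter Set Topology

section LinearOrderedRing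

variable {R : Type*} [Ring R] [LinearOrder R] [IsStrictOrderedRing R]
  [TopologicalSpace R] [OrderTopology R] {g : R → R} {a : R} {m : ℕ}

lemma eventually_nhdsGT_sub_pow_mul_pos (hg : ContinuousAt g a) (hga : 0 < g a) :
    ∀ᶠ x in 𝓝[>] a, 0 < (x - a) ^ m * g x := by
  filter_upwards [nhdsWithin_le_nhds (hg.eventually_const_lt hga), self_mem_nhdsWithin]
    with x hgx hax
  exact mul_pos (pow_pos (sub_pos.2 hax) m) hgx

lemma eventually_nhdsLT_sub_pow_mul_pos (hg : ContinuousAt g a) (hga : g a < 0) (hm : Odd m) :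
    ∀ᶠ x in 𝓝[<] a, 0 < (x - a) ^ m * g x := by
  filter_upwards [nhdsWithin_le_nhds (hg.eventually_lt_const hga), self_mem_nhdsWithin]
    with x hgx hxa
  exact mul_pos_of_neg_of_neg (hm.pow_neg (sub_neg.2 hxa)) hgx

lemma frequently_nhds_sub_pow_mul_pos [DenselyOrdered R] (hg : ContinuousAt g a)
    (hga : g a ≠ 0) (hm : Odd m) : ∃ᶠ x in 𝓝 a, 0 < (x - a) ^ m * g x := by
  rcases hga.lt_or_gt with hneg | hpos
  · exact (eventually_nhdsLT_sub_pow_mul_pos hg hneg hm).frequently.filter_mono nhdsWithin_le_nhds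
  · exact (eventually_nhdsGT_sub_pow_mul_pos hg hpos).frequently.filter_mono nhdsWithin_le_nhds

end LinearOrderedRing

section Polynomial

variable {R : Type*} [CommRing R]

lemma exists_eval_eq_sub_pow_rootMultiplicity_mul {p : R[X]} (hp : p ≠ 0) (a : R) :
    ∃ q : R[X], q.eval a ≠ 0 ∧ ∀ x, p.eval x = (x - a) ^ p.rootMultiplicity a * q.eval x := by
  obtain ⟨q, hpq, hq⟩ := p.exists_eq_pow_rootMultiplicity_mul_and_not_dvd hp a
  refine ⟨q, fun hqa => hq (dvd_iff_isRoot.2 hqa), fun x => ?_⟩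
  simpa using congrArg (eval x) hpq

variable [LinearOrder R] [IsStrictOrderedRing R] [DenselyOrdered R]
  [TopologicalSpace R] [OrderTopology R] [IsTopologicalRing R]

lemma mem_closure_eval_pos_of_odd_rootMultiplicity {p : R[X]} (hp : p ≠ 0) {a : R}
    (ha : Odd (p.rootMultiplicity a)) : a ∈ closure {t : R | 0 < p.eval t} := by
  obtain ⟨q, hqa, hpq⟩ := exists_eval_eq_sub_pow_rootMultiplicity_mul hp a
  simpa only [mem_closure_iff_frequently, mem_ofPred_eq, hpq] using
    frequently_nhds_sub_pow_mul_pos q.continuousAt hqa ha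

theorem nonneg_set_eq_closure_pos_set_general {p : R[X]} (hp : p ≠ 0)
    (hodd : ∀ a : R, p.IsRoot a → Odd (p.rootMultiplicity a)) :
    {t : R | 0 ≤ p.eval t} = closure {t : R | 0 < p.eval t} := by
  refine Subset.antisymm (fun a ha => ?_) (closure_lt_subset_le continuous_const p.continuous)
  rcases (mem_ofPred.1 ha).lt_or_eq with hpos | hroot
  · exact subset_closure hpos
  · exact mem_closure_eval_pos_of_odd_rootMultiplicity hp (hodd a hroot.symm)

end Polynomial

/-- If `p ∈ ℝ[t]` has positive degree and every real root of `p` has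
odd multiplicity, then `{t : p(t) ≥ 0}` is the closure of `{t : p(t) > 0}`. -/
theorem nonneg_set_eq_closure_pos_set
    (p : Polynomial ℝ) (hdeg : 0 < p.degree)
    (hodd : ∀ a : ℝ, p.IsRoot a → Odd (p.rootMultiplicity a)) :
    {t : ℝ | 0 ≤ p.eval t} = closure {t : ℝ | 0 < p.eval t} :=
  nonneg_set_eq_closure_pos_set_general (ne_zero_of_degree_gt hdeg) hodd
end

section
/- Let p_1, …, p_m be univariate real polynomials of positive degree such that: (1) every real root of each p_i has odd multiplicity; and (2) no two of p_1, …, p_m have a common real root. Then the closure of ⋂_{i=1}^{m} {t ∈ ℝ : p_i(t) > 0} equals ⋂_{i=1}^{m} {t ∈ ℝ : p_i(t) ≥ 0}. -/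
open Polynomial

/-!
At a point `t` where every `pᵢ` is nonnegative, at most one of them vanishes, say `pᵢ`; the others
stay positive on a neighbourhood of `t`. Since `t` is a root of `pᵢ` of odd multiplicity, `pᵢ`
changes sign there, so this neighbourhood contains points arbitrarily close to `t` at which `pᵢ`
is positive as well.
-/

theorem closure_iInter_setOf_lt {ι X α : Type*} [Finite ι] [TopologicalSpace X] [LinearOrder α]
    [TopologicalSpace α] [OrderClosedTopology α] {f g : ι → X → α}
    (hf : ∀ i, Continuous (f i)) (hg : ∀ i, Continuous (g i))
    (hclosure : ∀ i x, f i x = g i x → x ∈ closure {y | f i y < g i y})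
    (hdisj : Pairwise fun i j ↦ ∀ x, f i x = g i x → f j x ≠ g j x) :
    closure (⋂ i, {x | f i x < g i x}) = ⋂ i, {x | f i x ≤ g i x} := by
  apply Set.Subset.antisymm
  · exact closure_minimal (Set.iInter_mono fun i x hx ↦ le_of_lt hx)
      (isClosed_iInter fun i ↦ isClosed_le (hf i) (hg i))
  · intro x hx
    have hle : ∀ i, f i x ≤ g i x := Set.mem_iInter.mp hx
    by_cases hlt : ∀ i, f i x < g i x
    · exact subset_closure (Set.mem_iInter.mpr hlt)
    · obtain ⟨i, hi⟩ := not_forall.mp hlt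
      have heq : f i x = g i x := (hle i).eq_of_not_lt hi
      let U : Set X := ⋂ j, ⋂ (_ : j ≠ i), {y | f j y < g j y}
      have hU : IsOpen U :=
        isOpen_iInter_of_finite fun j ↦ isOpen_iInter_of_finite fun _ ↦ isOpen_lt (hf j) (hg j)
      have hxU : x ∈ U :=
        Set.mem_iInter₂.mpr fun j hj ↦ (hle j).lt_of_ne (hdisj hj.symm x heq)
      refine closure_mono ?_ (hU.inter_closure ⟨hxU, hclosure i x heq⟩)
      rintro y ⟨hyU, hyi⟩
      refine Set.mem_iInter.mpr fun j ↦ ?_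
      rcases eq_or_ne j i with rfl | hj
      · exact hyi
      · exact Set.mem_iInter₂.mp hyU j hj

section OrderedRing

variable {R : Type*} [CommRing R] [LinearOrder R] [IsStrictOrderedRing R] [DenselyOrdered R]
  [TopologicalSpace R] [OrderTopology R] [IsTopologicalRing R]

theorem mem_closure_setOf_eval_pos_of_odd_rootMultiplicity {p : R[X]} {a : R}
    (hodd : Odd (p.rootMultiplicity a)) : a ∈ closure {x | 0 < p.eval x} := by
  have hp : p ≠ 0 := by
    rintro rfl
    simp at hodd
  obtain ⟨q, hpq, hdvd⟩ := exists_eq_pow_rootMultiplicity_mul_and_not_dvd p hp a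
  have heval (x : R) : p.eval x = (x - a) ^ p.rootMultiplicity a * q.eval x := by
    simpa using congrArg (eval x) hpq
  have hqa : q.eval a ≠ 0 := fun h ↦ hdvd (dvd_iff_isRoot.mpr h)
  rcases hqa.lt_or_gt with hneg | hpos
  · have hleft : a ∈ closure (Set.Iio a) := by simp
    refine closure_mono ?_
      ((isOpen_lt q.continuous continuous_const).inter_closure ⟨hneg, hleft⟩)
    rintro x ⟨hqx, hxa⟩
    exact (mul_pos_of_neg_of_neg (hodd.pow_neg (sub_neg.mpr hxa)) hqx).trans_eq (heval x).symm
  · have hright : a ∈ closure (Set.Ioi a) := by simp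
    refine closure_mono ?_
      ((isOpen_lt continuous_const q.continuous).inter_closure ⟨hpos, hright⟩)
    rintro x ⟨hqx, hxa⟩
    exact (mul_pos (pow_pos (sub_pos.mpr hxa) _) hqx).trans_eq (heval x).symm

theorem closure_inter_pos_sets_general {ι : Type*} [Finite ι] (p : ι → R[X])
    (hodd : ∀ i a, (p i).IsRoot a → Odd ((p i).rootMultiplicity a))
    (hnc : ∀ i j, i ≠ j → ¬ ∃ a, (p i).IsRoot a ∧ (p j).IsRoot a) :
    closure (⋂ i, {t | 0 < (p i).eval t}) = ⋂ i, {t | 0 ≤ (p i).eval t} :=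
  closure_iInter_setOf_lt (fun _ ↦ continuous_const) (fun i ↦ (p i).continuous)
    (fun i a ha ↦ mem_closure_setOf_eval_pos_of_odd_rootMultiplicity (hodd i a ha.symm))
    (fun i j hij a hi hj ↦ hnc i j hij ⟨a, hi.symm, hj.symm⟩)

end OrderedRing

/-- If `p₁, …, pₘ ∈ ℝ[t]` have positive degrees, every real root of
each `pᵢ` has odd multiplicity, and no two of the `pᵢ` have a common real root, then
the closure of `⋂ᵢ {t : pᵢ(t) > 0}` is `⋂ᵢ {t : pᵢ(t) ≥ 0}`. -/
theorem closure_inter_pos_sets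
    (m : ℕ) (p : Fin m → Polynomial ℝ)
    (hdeg : ∀ i, 0 < (p i).degree)
    (hodd : ∀ i, ∀ a : ℝ, (p i).IsRoot a → Odd ((p i).rootMultiplicity a))
    (hnc : ∀ i j, i ≠ j → ¬ ∃ a : ℝ, (p i).IsRoot a ∧ (p j).IsRoot a) :
    closure (⋂ i, {t : ℝ | 0 < (p i).eval t}) = ⋂ i, {t : ℝ | 0 ≤ (p i).eval t} :=
  closure_inter_pos_sets_general p hodd hnc
end

section
/- Let p_1, …, p_m and q_1, …, q_l be univariate real polynomials with l ≥ 1, where each q_j is squarefree (every complex root of q_j is simple), and let B = {t ∈ ℝ : p_1(t) > 0, …, p_m(t) > 0, q_1(t) = ⋯ = q_l(t) = 0}. Fix i ∈ {1, …, m}, let w = gcd(p_i, q_1, …, q_l) in ℝ[t], and for each j let q̌_j = q_j / w (an exact division, since w divides q_j). Then: (1) B = {t ∈ ℝ : p_1(t) > 0, …, p_m(t) > 0, q̌_1(t) = ⋯ = q̌_l(t) = 0}; and (2) there is no real number a with p_i(a) = 0 and q̌_1(a) = ⋯ = q̌_l(a) = 0. -/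
open Polynomial

/-- A real univariate polynomial has only simple (complex) roots: it is nonzero and
every complex root has multiplicity at most one. -/
def HasOnlySimpleComplexRoots (p : Polynomial ℝ) : Prop :=
  p ≠ 0 ∧ ∀ a : ℂ, (p.map (algebraMap ℝ ℂ)).rootMultiplicity a ≤ 1

/-!
At a point where `pᵢ` does not vanish, neither does its divisor `w`, so there `q_j = w * q̌_j`
and `q̌_j` have the same zeros. A common root `a` of `pᵢ` and all the `q̌_j` is a root of `pᵢ`
and of all the `q_j`, hence of their gcd `w`; then `t - a` divides both factors of
`q_j = w * q̌_j`, so `a` would be a multiple root of every `q_j`.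
-/

-- For `b = 0` this is the junk value `a / 0`, harmless since `0 ∣ a` forces `a = 0`.
theorem mul_div_eq_of_dvd {R : Type*} [EuclideanDomain R] {a b : R} (h : b ∣ a) :
    b * (a / b) = a := by
  rcases eq_or_ne b 0 with rfl | hb
  · rw [zero_dvd_iff.mp h, zero_mul]
  · exact EuclideanDomain.mul_div_cancel' hb h

section Field

variable {K : Type*} [Field K] {f w : K[X]} {a : K}

theorem eval_mul_eval_div_of_dvd (h : w ∣ f) (a : K) : w.eval a * (f / w).eval a = f.eval a := by
  rw [← eval_mul, mul_div_eq_of_dvd h]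

theorem eval_div_eq_zero_iff_of_dvd (h : w ∣ f) (hw : w.eval a ≠ 0) :
    (f / w).eval a = 0 ↔ f.eval a = 0 := by
  rw [← eval_mul_eval_div_of_dvd h a, mul_eq_zero_iff_left hw]

theorem isRoot_of_isRoot_div (h : w ∣ f) (ha : (f / w).IsRoot a) : f.IsRoot a := by
  rw [IsRoot, ← eval_mul_eval_div_of_dvd h a, ha, mul_zero]

theorem X_sub_C_sq_dvd_of_isRoot_div (h : w ∣ f) (hw : w.IsRoot a) (ha : (f / w).IsRoot a) :
    (X - C a) ^ 2 ∣ f := by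
  rw [← mul_div_eq_of_dvd h, sq]
  exact mul_dvd_mul (dvd_iff_isRoot.mpr hw) (dvd_iff_isRoot.mpr ha)

end Field

theorem HasOnlySimpleComplexRoots.not_X_sub_C_sq_dvd {f : ℝ[X]}
    (hf : HasOnlySimpleComplexRoots f) (a : ℝ) : ¬ (X - C a) ^ 2 ∣ f := by
  rw [← le_rootMultiplicity_iff hf.1, eq_rootMultiplicity_map (algebraMap ℝ ℂ).injective]
  exact (hf.2 a).trans_lt one_lt_two |>.not_ge

theorem remove_common_root_with_variety_general {K ι κ : Type*} [Field K] [Preorder K]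
    (p : ι → K[X]) (q : κ → K[X]) (hq : ∀ a, ∃ j, ¬ (X - C a) ^ 2 ∣ q j)
    (i : ι) (w : K[X]) (hw : ∀ d, d ∣ w ↔ d ∣ p i ∧ ∀ j, d ∣ q j) :
    ({t : K | (∀ i', 0 < (p i').eval t) ∧ ∀ j, (q j).eval t = 0}
      = {t : K | (∀ i', 0 < (p i').eval t) ∧ ∀ j, (q j / w).eval t = 0}) ∧
    ¬ ∃ a : K, (p i).eval a = 0 ∧ ∀ j, (q j / w).eval a = 0 := by
  obtain ⟨hwp, hwq⟩ := (hw w).mp dvd_rfl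
  constructor
  · ext t
    refine and_congr_right fun hp => forall_congr' fun j => ?_
    have hwt : w.eval t ≠ 0 := fun hroot => (hp i).ne' (IsRoot.dvd hroot hwp)
    exact (eval_div_eq_zero_iff_of_dvd (hwq j) hwt).symm
  · rintro ⟨a, hpa, hqa⟩
    have hwa : w.IsRoot a := dvd_iff_isRoot.mp <| (hw _).mpr
      ⟨dvd_iff_isRoot.mpr hpa, fun j => dvd_iff_isRoot.mpr (isRoot_of_isRoot_div (hwq j) (hqa j))⟩
    obtain ⟨j, hj⟩ := hq a
    exact hj (X_sub_C_sq_dvd_of_isRoot_div (hwq j) hwa (hqa j))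

/-- Let `B = {t : p₁(t) > 0, …, pₘ(t) > 0, q₁(t) = ⋯ = q_l(t) = 0}`
with `l ≥ 1` and each `q_j` squarefree.  Fix `i`, let `w = gcd(pᵢ, q₁, …, q_l)` and
`q̌_j = q_j / w`.  Then `B` is also cut out by the `pᵢ' > 0` and `q̌_j = 0`, and no real
number is simultaneously a root of `pᵢ` and of all the `q̌_j`. -/
theorem remove_common_root_with_variety
    (m l : ℕ) (hl : 0 < l)
    (p : Fin m → Polynomial ℝ) (q : Fin l → Polynomial ℝ)
    (hq : ∀ j, HasOnlySimpleComplexRoots (q j))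
    (i : Fin m)
    (w : Polynomial ℝ) (hw : w = gcd (p i) (Finset.univ.gcd q)) :
    ({t : ℝ | (∀ i', 0 < (p i').eval t) ∧ ∀ j, (q j).eval t = 0}
      = {t : ℝ | (∀ i', 0 < (p i').eval t) ∧ ∀ j, (q j / w).eval t = 0}) ∧
    ¬ ∃ a : ℝ, (p i).eval a = 0 ∧ ∀ j, (q j / w).eval a = 0 :=
  remove_common_root_with_variety_general p q
    (fun a => ⟨⟨0, hl⟩, (hq _).not_X_sub_C_sq_dvd a⟩) i w
    fun d => by simp [hw, dvd_gcd_iff, Finset.dvd_gcd_iff]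
end

section
/- Let p_1, …, p_m and q_1, …, q_l be univariate real polynomials with l ≥ 1 and each q_j nonzero, and let B = {t ∈ ℝ : p_1(t) > 0, …, p_m(t) > 0, q_1(t) = ⋯ = q_l(t) = 0}. Then there exist univariate real polynomials q̌_1, …, q̌_l such that: (1) B = {t ∈ ℝ : p_1(t) > 0, …, p_m(t) > 0, q̌_1(t) = ⋯ = q̌_l(t) = 0}; and (2) for every i ∈ {1, …, m}, there is no real number a with p_i(a) = 0 and q̌_1(a) = ⋯ = q̌_l(a) = 0. -/
open Polynomial

/-! The common zeros of the `q_j` form a finite set, so `B` is finite and hence is the zero set of a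
single polynomial. Take every `q̌_j` to be that polynomial: their common zeros are then exactly `B`,
where no `p_i` vanishes because all of them are positive there. -/

section

variable {R κ : Type*} [CommRing R] [IsDomain R]

theorem finite_setOfPred_forall_eval_eq_zero {q : κ → R[X]} (hq : ∃ j, q j ≠ 0) :
    {t : R | ∀ j, (q j).eval t = 0}.Finite :=
  let ⟨j, hj⟩ := hq
  (finite_setOfPred_isRoot hj).subset fun _ ht => ht j

theorem exists_eval_eq_zero_iff_mem_of_finite {S : Set R} (hS : S.Finite) :
    ∃ f : R[X], ∀ t, f.eval t = 0 ↔ t ∈ S :=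
  ⟨Lagrange.nodal hS.toFinset id, fun t => by
    simp [Lagrange.eval_nodal, Finset.prod_eq_zero_iff, sub_eq_zero]⟩

theorem exists_equations_without_common_roots_general {ι : Type*} [Preorder R]
    (p : ι → R[X]) (q : κ → R[X]) (hq : ∃ j, q j ≠ 0) :
    ∃ qc : κ → R[X],
      ({t : R | (∀ i, 0 < (p i).eval t) ∧ ∀ j, (q j).eval t = 0}
        = {t : R | (∀ i, 0 < (p i).eval t) ∧ ∀ j, (qc j).eval t = 0}) ∧
      ∀ i, ¬ ∃ a : R, (p i).eval a = 0 ∧ ∀ j, (qc j).eval a = 0 := by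
  let B : Set R := {t | (∀ i, 0 < (p i).eval t) ∧ ∀ j, (q j).eval t = 0}
  have B_finite : B.Finite := (finite_setOfPred_forall_eval_eq_zero hq).subset fun _ ht => ht.2
  obtain ⟨f, hf⟩ := exists_eval_eq_zero_iff_mem_of_finite B_finite
  obtain ⟨j₀, -⟩ := hq
  refine ⟨fun _ => f, Set.ext fun t => ⟨fun ht => ?_, fun ht => ?_⟩, ?_⟩
  · exact ⟨ht.1, fun _ => (hf t).2 ht⟩
  · exact (hf t).1 (ht.2 j₀)
  · rintro i ⟨a, hpa, hfa⟩
    have a_mem : a ∈ B := (hf a).1 (hfa j₀)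
    exact (a_mem.1 i).ne' hpa

end

/-- Let `B = {t : p₁(t) > 0, …, pₘ(t) > 0, q₁(t) = ⋯ = q_l(t) = 0}`
with `l ≥ 1` and each `q_j` nonzero.  Then there are polynomials `q̌₁, …, q̌_l` cutting
out the same set `B` (together with the inequalities `pᵢ > 0`) such that no `pᵢ` has a
real root lying in the variety of the `q̌_j`. -/
theorem exists_equations_without_common_roots
    (m l : ℕ) (hl : 0 < l)
    (p : Fin m → Polynomial ℝ) (q : Fin l → Polynomial ℝ)
    (hq : ∀ j, q j ≠ 0) :
    ∃ qc : Fin l → Polynomial ℝ,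
      ({t : ℝ | (∀ i, 0 < (p i).eval t) ∧ ∀ j, (q j).eval t = 0}
        = {t : ℝ | (∀ i, 0 < (p i).eval t) ∧ ∀ j, (qc j).eval t = 0}) ∧
      ∀ i, ¬ ∃ a : ℝ, (p i).eval a = 0 ∧ ∀ j, (qc j).eval a = 0 :=
  exists_equations_without_common_roots_general p q ⟨⟨0, hl⟩, hq _⟩
end

section
/- Let p_1, …, p_m and q_1, …, q_l be univariate real polynomials, let B = {t ∈ ℝ : p_1(t) > 0, …, p_m(t) > 0, q_1(t) = ⋯ = q_l(t) = 0}, and let s, r be integers with 0 ≤ s < r < m. Assume: (1) each p_i is squarefree; (2) no p_i has a real root a with q_1(a) = ⋯ = q_l(a) = 0; (3) for every pair i ≠ j in {1, …, r}, p_i and p_j have no common complex root; (4) for every i ∈ {1, …, s}, p_{r+1} and p_i have no common complex root. Let u_0 = gcd(p_{s+1}, p_{r+1}), u_{s+1} = p_{s+1}/u_0, and u_{r+1} = p_{r+1}/u_0 (exact divisions). Let B_+ (resp. B_−) be the set obtained from the description of B by replacing the two inequalities p_{s+1} > 0 and p_{r+1} > 0 with the three inequalities u_0 > 0, u_{s+1}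 > 0, u_{r+1} > 0 (resp. −u_0 > 0, −u_{s+1} > 0, −u_{r+1} > 0), keeping all other inequalities p_i > 0 and all equations q_j = 0. Then B = B_+ ∪ B_−, and moreover: u_0, u_{s+1}, u_{r+1} are squarefree; none of u_0, u_{s+1}, u_{r+1} has a real root a with q_1(a) = ⋯ = q_l(a) = 0; for every i ∈ {1, …, s} ∪ {s+2, …, r}, u_0 and p_i have no common complex root and u_{s+1} and p_i have no common complex root; u_0 and u_{s+1} have no common complex root; for every i ∈ {1, …, s}, u_{r+1} and p_i have no common complex root; u_{r+1} and u_0 have no common complex root; and u_{r+1} and u_{s+1} have no common complex root. -/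
open Polynomial

/-- Two real univariate polynomials have a common complex root. -/
def HasCommonComplexRoot (p q : Polynomial ℝ) : Prop :=
  ∃ a : ℂ, Polynomial.aeval a p = 0 ∧ Polynomial.aeval a q = 0

/-!
Write `f = u₀ * u₁` and `g = u₀ * u₂` with `u₀ = gcd f g`. If `f` and `g` are squarefree, `u₀` is
coprime to `u₁` and to `u₂`; dividing out the gcd makes `u₁` and `u₂` coprime; the other algebraic
conditions pass from `f` and `g` to their divisors. On the real side, `u₀ * u₁` and `u₀ * u₂` are
both positive exactly when the three factors have the same sign. Having only simple complex roots
amounts to squarefreeness over `ℝ` because `ℝ` is perfect, and having no common complex root amounts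
to coprimality by the Nullstellensatz.
-/

theorem squarefree_iff_ne_zero_and_rootMultiplicity_map_le_one {K L : Type*} [Field K]
    [PerfectField K] [Field L] [IsAlgClosed L] [Algebra K L] (f : K[X]) :
    Squarefree f ↔ f ≠ 0 ∧ ∀ a : L, (f.map (algebraMap K L)).rootMultiplicity a ≤ 1 := by
  classical
  rcases eq_or_ne f 0 with rfl | hf
  · simp
  rw [← PerfectField.separable_iff_squarefree,
    ← nodup_aroots_iff_of_splits hf (IsAlgClosed.splits (f.map (algebraMap K L))),
    Multiset.nodup_iff_count_le_one]
  simp only [aroots_def, count_roots, ne_eq, hf, not_false_eq_true, true_and]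

theorem hasOnlySimpleComplexRoots_iff_squarefree (f : ℝ[X]) :
    HasOnlySimpleComplexRoots f ↔ Squarefree f :=
  (squarefree_iff_ne_zero_and_rootMultiplicity_map_le_one f).symm

theorem not_hasCommonComplexRoot_iff_isCoprime (f g : ℝ[X]) :
    ¬ HasCommonComplexRoot f g ↔ IsCoprime f g := by
  simp only [isCoprime_iff_aeval_ne_zero_of_isAlgClosed ℝ ℂ, HasCommonComplexRoot, not_exists,
    not_and_or, ne_eq]

theorem mul_pos_and_mul_pos_iff {R : Type*} [Ring R] [LinearOrder R] [IsStrictOrderedRing R]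
    {x y z : R} :
    0 < x * y ∧ 0 < x * z ↔ 0 < x ∧ 0 < y ∧ 0 < z ∨ 0 < -x ∧ 0 < -y ∧ 0 < -z := by
  simp only [neg_pos, mul_pos_iff]
  have : 0 < x → ¬ x < 0 := lt_asymm
  tauto

theorem forall_mem_iff_and_and_forall_mem_ne {ι : Type*} {I : Set ι} {P : ι → Prop} {a b : ι}
    (ha : a ∈ I) (hb : b ∈ I) :
    (∀ i ∈ I, P i) ↔ (P a ∧ P b) ∧ ∀ i ∈ I, i ≠ a → i ≠ b → P i := by
  refine ⟨fun h => ⟨⟨h a ha, h b hb⟩, fun i hi _ _ => h i hi⟩, fun ⟨⟨hPa, hPb⟩, h⟩ i hi => ?_⟩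
  by_cases hia : i = a
  · exact hia ▸ hPa
  by_cases hib : i = b
  · exact hib ▸ hPb
  exact h i hi hia hib

theorem setOf_forall_eval_pos_eq_union {K ι : Type*} [CommRing K] [LinearOrder K]
    [IsStrictOrderedRing K] {p : ι → K[X]} {I : Set ι} (V : Set K) {a b : ι} (ha : a ∈ I)
    (hb : b ∈ I) {u₀ u₁ u₂ : K[X]} (hpa : p a = u₀ * u₁) (hpb : p b = u₀ * u₂) :
    {t | (∀ i ∈ I, 0 < (p i).eval t) ∧ t ∈ V} =
      {t | 0 < u₀.eval t ∧ 0 < u₁.eval t ∧ 0 < u₂.eval t ∧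
        (∀ i ∈ I, i ≠ a → i ≠ b → 0 < (p i).eval t) ∧ t ∈ V} ∪
      {t | 0 < -u₀.eval t ∧ 0 < -u₁.eval t ∧ 0 < -u₂.eval t ∧
        (∀ i ∈ I, i ≠ a → i ≠ b → 0 < (p i).eval t) ∧ t ∈ V} := by
  ext t
  rw [Set.mem_ofPred_eq, forall_mem_iff_and_and_forall_mem_ne ha hb, hpa, hpb, eval_mul, eval_mul,
    mul_pos_and_mul_pos_iff]
  simp only [Set.mem_union, Set.mem_ofPred_eq, or_and_right, and_assoc]

theorem not_exists_root_mem_of_dvd {R : Type*} [CommSemiring R] {V : Set R} {f g : R[X]}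
    (hfg : f ∣ g) (hg : ¬ ∃ t, g.eval t = 0 ∧ t ∈ V) : ¬ ∃ t, f.eval t = 0 ∧ t ∈ V :=
  fun ⟨t, ht, htV⟩ => hg ⟨t, eval_eq_zero_of_dvd_of_eval_eq_zero hfg ht, htV⟩

/-- `V` plays the part of `{q₁ = ⋯ = q_l = 0}`, which matters only as a set of points. -/
theorem split_off_gcd_of_two_inequalities_general {K ι : Type*} [Field K] [LinearOrder K]
    [IsStrictOrderedRing K] [GCDMonoid K[X]] (p : ι → K[X]) {I A B : Set ι} {V : Set K} {a b : ι}
    (ha : a ∈ I) (hb : b ∈ I) (hsqa : Squarefree (p a)) (hsqb : Squarefree (p b))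
    (hVa : ¬ ∃ t, (p a).eval t = 0 ∧ t ∈ V) (hVb : ¬ ∃ t, (p b).eval t = 0 ∧ t ∈ V)
    (hA : ∀ i ∈ A, IsCoprime (p a) (p i)) (hB : ∀ i ∈ B, IsCoprime (p b) (p i))
    {u₀ u₁ u₂ : K[X]} (hu₀ : u₀ = gcd (p a) (p b)) (hu₁ : u₁ = p a / u₀) (hu₂ : u₂ = p b / u₀) :
    {t | (∀ i ∈ I, 0 < (p i).eval t) ∧ t ∈ V} =
      {t | 0 < u₀.eval t ∧ 0 < u₁.eval t ∧ 0 < u₂.eval t ∧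
        (∀ i ∈ I, i ≠ a → i ≠ b → 0 < (p i).eval t) ∧ t ∈ V} ∪
      {t | 0 < -u₀.eval t ∧ 0 < -u₁.eval t ∧ 0 < -u₂.eval t ∧
        (∀ i ∈ I, i ≠ a → i ≠ b → 0 < (p i).eval t) ∧ t ∈ V} ∧
    (Squarefree u₀ ∧ Squarefree u₁ ∧ Squarefree u₂) ∧
    ((¬ ∃ t, u₀.eval t = 0 ∧ t ∈ V) ∧ (¬ ∃ t, u₁.eval t = 0 ∧ t ∈ V) ∧
      (¬ ∃ t, u₂.eval t = 0 ∧ t ∈ V)) ∧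
    (∀ i ∈ A, IsCoprime u₀ (p i)) ∧ (∀ i ∈ A, IsCoprime u₁ (p i)) ∧ IsCoprime u₀ u₁ ∧
    (∀ i ∈ B, IsCoprime u₂ (p i)) ∧ IsCoprime u₂ u₀ ∧ IsCoprime u₂ u₁ := by
  have hcop : IsCoprime u₁ u₂ := by
    rw [hu₁, hu₂, hu₀]
    exact isCoprime_div_gcd_div_gcd hsqb.ne_zero
  have hu₀_ne : u₀ ≠ 0 := hu₀ ▸ gcd_ne_zero_of_left hsqa.ne_zero
  have hpa : p a = u₀ * u₁ :=
    hu₁ ▸ (EuclideanDomain.mul_div_cancel' hu₀_ne (hu₀ ▸ gcd_dvd_left _ _)).symm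
  have hpb : p b = u₀ * u₂ :=
    hu₂ ▸ (EuclideanDomain.mul_div_cancel' hu₀_ne (hu₀ ▸ gcd_dvd_right _ _)).symm
  have h₀a : u₀ ∣ p a := hpa ▸ dvd_mul_right u₀ u₁
  have h₁a : u₁ ∣ p a := hpa ▸ dvd_mul_left u₁ u₀
  have h₂b : u₂ ∣ p b := hpb ▸ dvd_mul_left u₂ u₀
  exact ⟨setOf_forall_eval_pos_eq_union V ha hb hpa hpb,
    ⟨hsqa.squarefree_of_dvd h₀a, hsqa.squarefree_of_dvd h₁a, hsqb.squarefree_of_dvd h₂b⟩,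
    ⟨not_exists_root_mem_of_dvd h₀a hVa, not_exists_root_mem_of_dvd h₁a hVa,
      not_exists_root_mem_of_dvd h₂b hVb⟩,
    fun i hi => (hA i hi).of_isCoprime_of_dvd_left h₀a,
    fun i hi => (hA i hi).of_isCoprime_of_dvd_left h₁a,
    (squarefree_mul_iff.1 (hpa ▸ hsqa)).1.isCoprime,
    fun i hi => (hB i hi).of_isCoprime_of_dvd_left h₂b,
    (squarefree_mul_iff.1 (hpb ▸ hsqb)).1.isCoprime.symm,
    hcop.symm⟩

/-- Splitting an elementary semi-algebraic subset of `ℝ`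
(described by `p₁ > 0, …, pₘ > 0, q₁ = ⋯ = q_l = 0`, polynomials indexed `1, …, m`
and `1, …, l`) into two pieces `B₊ ∪ B₋` by factoring out `u₀ = gcd(p_{s+1}, p_{r+1})`,
with `u_{s+1} = p_{s+1}/u₀`, `u_{r+1} = p_{r+1}/u₀`, preserving squarefreeness, absence
of roots in the variety `{q₁ = ⋯ = q_l = 0}`, and absence of common complex roots as
described in the paper. -/
theorem split_off_gcd_of_two_inequalities
    (m l s r : ℕ) (p q : ℕ → Polynomial ℝ)
    (hsr : s < r) (hrm : r < m)
    (h1 : ∀ i ∈ Finset.Icc 1 m, HasOnlySimpleComplexRoots (p i))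
    (h2 : ∀ i ∈ Finset.Icc 1 m,
      ¬ ∃ a : ℝ, (p i).eval a = 0 ∧ ∀ j ∈ Finset.Icc 1 l, (q j).eval a = 0)
    (h3 : ∀ i ∈ Finset.Icc 1 r, ∀ j ∈ Finset.Icc 1 r, i ≠ j →
      ¬ HasCommonComplexRoot (p i) (p j))
    (h4 : ∀ i ∈ Finset.Icc 1 s, ¬ HasCommonComplexRoot (p (r + 1)) (p i))
    (u₀ u₁ u₂ : Polynomial ℝ)
    (hu₀ : u₀ = gcd (p (s + 1)) (p (r + 1)))
    (hu₁ : u₁ = p (s + 1) / u₀) (hu₂ : u₂ = p (r + 1) / u₀)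
    (B Bp Bm : Set ℝ)
    (hB : B = {t | (∀ i ∈ Finset.Icc 1 m, 0 < (p i).eval t) ∧
        ∀ j ∈ Finset.Icc 1 l, (q j).eval t = 0})
    (hBp : Bp = {t | 0 < u₀.eval t ∧ 0 < u₁.eval t ∧ 0 < u₂.eval t ∧
        (∀ i ∈ Finset.Icc 1 m, i ≠ s + 1 → i ≠ r + 1 → 0 < (p i).eval t) ∧
        ∀ j ∈ Finset.Icc 1 l, (q j).eval t = 0})
    (hBm : Bm = {t | 0 < -u₀.eval t ∧ 0 < -u₁.eval t ∧ 0 < -u₂.eval t ∧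
        (∀ i ∈ Finset.Icc 1 m, i ≠ s + 1 → i ≠ r + 1 → 0 < (p i).eval t) ∧
        ∀ j ∈ Finset.Icc 1 l, (q j).eval t = 0}) :
    B = Bp ∪ Bm ∧
    (HasOnlySimpleComplexRoots u₀ ∧ HasOnlySimpleComplexRoots u₁ ∧
      HasOnlySimpleComplexRoots u₂) ∧
    ((¬ ∃ a : ℝ, u₀.eval a = 0 ∧ ∀ j ∈ Finset.Icc 1 l, (q j).eval a = 0) ∧
      (¬ ∃ a : ℝ, u₁.eval a = 0 ∧ ∀ j ∈ Finset.Icc 1 l, (q j).eval a = 0) ∧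
      (¬ ∃ a : ℝ, u₂.eval a = 0 ∧ ∀ j ∈ Finset.Icc 1 l, (q j).eval a = 0)) ∧
    (∀ i ∈ Finset.Icc 1 s ∪ Finset.Icc (s + 2) r,
      ¬ HasCommonComplexRoot u₀ (p i)) ∧
    (∀ i ∈ Finset.Icc 1 s ∪ Finset.Icc (s + 2) r,
      ¬ HasCommonComplexRoot u₁ (p i)) ∧
    (¬ HasCommonComplexRoot u₀ u₁) ∧
    (∀ i ∈ Finset.Icc 1 s, ¬ HasCommonComplexRoot u₂ (p i)) ∧
    (¬ HasCommonComplexRoot u₂ u₀) ∧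
    (¬ HasCommonComplexRoot u₂ u₁) := by
  have hs : s + 1 ∈ Finset.Icc 1 m := by grind
  have hr : r + 1 ∈ Finset.Icc 1 m := by grind
  simp only [hasOnlySimpleComplexRoots_iff_squarefree, not_hasCommonComplexRoot_iff_isCoprime]
    at h1 h3 h4 ⊢
  subst hB hBp hBm
  exact split_off_gcd_of_two_inequalities_general p (I := Finset.Icc 1 m)
    (A := (Finset.Icc 1 s ∪ Finset.Icc (s + 2) r : Finset ℕ)) (B := Finset.Icc 1 s)
    (V := {t | ∀ j ∈ Finset.Icc 1 l, (q j).eval t = 0}) hs hr (h1 _ hs) (h1 _ hr) (h2 _ hs)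
    (h2 _ hr) (fun i hi => h3 _ (by grind) i (by grind) (by grind)) h4 hu₀ hu₁ hu₂
end

section
/- For every nonzero univariate real polynomial p there exist univariate real polynomials p̃ and w such that: (1) p = p̃ · w; (2) w(t) ≥ 0 for all t ∈ ℝ; (3) p̃ is squarefree; (4) p̃ and p have the same leading coefficient; (5) a complex number a is a root of p̃ if and only if the multiplicity of a as a root of p is odd; and (6) for every t ∈ ℝ, if p(t) > 0 then p̃(t) > 0. -/
/-!
Splitting off repeated factors writes `p = s * q ^ 2` with `s` squarefree, and scaling makes `q`
monic. The square has even multiplicity at every point, while `s` has multiplicity at most one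
because squarefree polynomials over a perfect field are separable. Hence the roots of `s` are the
roots of `p` of odd multiplicity, and the nonnegativity of `q ^ 2` takes care of the signs.
-/

open Polynomial

theorem exists_squarefree_mul_sq {M : Type*} [CommMonoidWithZero M] [WfDvdMonoid M]
    {a : M} (ha : a ≠ 0) : ∃ s q : M, Squarefree s ∧ a = s * q ^ 2 := by
  induction a using (wellFounded_dvdNotUnit (α := M)).induction with
  | _ a ih =>
    by_cases hsq : Squarefree a
    · exact ⟨a, 1, hsq, by simp⟩
    · obtain ⟨r, ⟨b, rfl⟩, hr⟩ : ∃ r, r * r ∣ a ∧ ¬IsUnit r := by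
        simpa [Squarefree] using hsq
      have hb : b ≠ 0 := right_ne_zero_of_mul ha
      have hbr : DvdNotUnit b (r * r * b) :=
        ⟨hb, r * r, fun h ↦ hr (isUnit_of_mul_isUnit_left h), mul_comm _ _⟩
      obtain ⟨s, q, hs, rfl⟩ := ih b hbr hb
      exact ⟨s, r * q, hs, by rw [mul_pow, sq r, mul_left_comm]⟩

theorem exists_squarefree_mul_monic_sq {F : Type*} [Field F] {p : F[X]} (hp : p ≠ 0) :
    ∃ s q : F[X], Squarefree s ∧ q.Monic ∧ p = s * q ^ 2 := by
  obtain ⟨s, q, hs, rfl⟩ := exists_squarefree_mul_sq hp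
  have hq : q ≠ 0 := fun h ↦ hp (by simp [h])
  have hc : q.leadingCoeff ≠ 0 := leadingCoeff_ne_zero.mpr hq
  have hunit : IsUnit (C q.leadingCoeff) := isUnit_C.mpr hc.isUnit
  have hcancel : C q.leadingCoeff * C q.leadingCoeff⁻¹ = 1 := by
    rw [← C_mul, mul_inv_cancel₀ hc, C_1]
  refine ⟨s * C q.leadingCoeff ^ 2, q * C q.leadingCoeff⁻¹, ?_, monic_mul_leadingCoeff_inv hq, ?_⟩
  · exact (associated_mul_unit_right s _ (hunit.pow 2)).squarefree_iff.mp hs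
  · calc
      s * q ^ 2 = s * q ^ 2 * (C q.leadingCoeff * C q.leadingCoeff⁻¹) ^ 2 := by
        rw [hcancel, one_pow, mul_one]
      _ = s * C q.leadingCoeff ^ 2 * (q * C q.leadingCoeff⁻¹) ^ 2 := by ring

theorem rootMultiplicity_map_le_one_of_squarefree {F K : Type*} [Field F] [PerfectField F]
    [CommRing K] [Nontrivial K] [Algebra F K] {s : F[X]} (hs : Squarefree s) (a : K) :
    (s.map (algebraMap F K)).rootMultiplicity a ≤ 1 :=
  rootMultiplicity_le_one_of_separable (PerfectField.separable_iff_squarefree.mpr hs).map a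

theorem odd_rootMultiplicity_mul_sq_iff {R : Type*} [CommRing R] [IsDomain R] {s q : R[X]}
    (hsq : s * q ^ 2 ≠ 0) {a : R} (hs : s.rootMultiplicity a ≤ 1) :
    Odd ((s * q ^ 2).rootMultiplicity a) ↔ s.IsRoot a := by
  have hmul : (s * q ^ 2).rootMultiplicity a =
      s.rootMultiplicity a + 2 * q.rootMultiplicity a := by
    rw [rootMultiplicity_mul hsq, sq, rootMultiplicity_mul (sq q ▸ right_ne_zero_of_mul hsq),
      two_mul]
  rw [hmul, ← rootMultiplicity_pos (left_ne_zero_of_mul hsq), Nat.odd_iff]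
  lia

theorem exists_odd_part_general {F : Type*} [Field F] [LinearOrder F] [IsStrictOrderedRing F]
    (K : Type*) [CommRing K] [IsDomain K] [Algebra F K] (p : F[X]) (hp : p ≠ 0) :
    ∃ pt w : F[X],
      p = pt * w ∧
      (∀ t : F, 0 ≤ w.eval t) ∧
      Squarefree pt ∧
      pt.leadingCoeff = p.leadingCoeff ∧
      (∀ a : K, aeval a pt = 0 ↔ Odd ((p.map (algebraMap F K)).rootMultiplicity a)) ∧
      (∀ t : F, 0 < p.eval t → 0 < pt.eval t) := by
  obtain ⟨s, q, hs, hq, rfl⟩ := exists_squarefree_mul_monic_sq hp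
  have hnonneg (t : F) : 0 ≤ (q ^ 2).eval t := by
    rw [eval_pow]
    exact sq_nonneg _
  refine ⟨s, q ^ 2, rfl, hnonneg, hs, (leadingCoeff_mul_monic (hq.pow 2)).symm, fun a ↦ ?_,
    fun t ht ↦ ?_⟩
  · have hmap : s.map (algebraMap F K) * q.map (algebraMap F K) ^ 2 ≠ 0 := by
      rwa [← Polynomial.map_pow, ← Polynomial.map_mul,
        Polynomial.map_ne_zero_iff (algebraMap F K).injective]
    rw [Polynomial.map_mul, Polynomial.map_pow, odd_rootMultiplicity_mul_sq_iff hmap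
      (rootMultiplicity_map_le_one_of_squarefree hs a), IsRoot.def, eval_map_algebraMap]
  · rw [eval_mul] at ht
    exact pos_of_mul_pos_left ht (hnonneg t)

/-- Every nonzero `p ∈ ℝ[t]` factors as `p = p̃ · w` with `w ≥ 0`
on `ℝ`, `p̃` squarefree with the same leading coefficient as `p`, whose complex roots
are exactly the roots of `p` of odd multiplicity; moreover `p(t) > 0` implies
`p̃(t) > 0` for real `t`. -/
theorem exists_odd_part
    (p : Polynomial ℝ) (hp : p ≠ 0) :
    ∃ pt w : Polynomial ℝ,
      p = pt * w ∧
      (∀ t : ℝ, 0 ≤ w.eval t) ∧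
      HasOnlySimpleComplexRoots pt ∧
      pt.leadingCoeff = p.leadingCoeff ∧
      (∀ a : ℂ, Polynomial.aeval a pt = 0 ↔
        Odd ((p.map (algebraMap ℝ ℂ)).rootMultiplicity a)) ∧
      (∀ t : ℝ, 0 < p.eval t → 0 < pt.eval t) := by
  obtain ⟨pt, w, hpw, hw, hpt, hlead, hodd, hpos⟩ := exists_odd_part_general ℂ p hp
  exact ⟨pt, w, hpw, hw, ⟨hpt.ne_zero, rootMultiplicity_map_le_one_of_squarefree hpt⟩,
    hlead, hodd, hpos⟩
end

section
/- Let p be a univariate real polynomial of positive degree and let p̃ be a univariate real polynomial such that p̃ is squarefree, p̃ has the same leading coefficient as p, and the complex roots of p̃ are exactly the roots of p of odd multiplicity (so p̃ is the constant lc(p) if p has no root of odd multiplicity). Then the closure of {t ∈ ℝ : p(t) > 0} equals {t ∈ ℝ : p̃(t) ≥ 0}. -/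
open Polynomial

/-!
At a real root where `p` has odd multiplicity, `p` changes sign, so such a root is a limit of points
where `p` is positive. Every real root of `p * p̃` has even multiplicity and its leading coefficient
is positive, so `p * p̃ ≥ 0` on `ℝ`: where `p̃ > 0`, also `p > 0` away from the finitely many roots
of `p`, and where `p > 0`, also `p̃ ≥ 0`.
-/

open Filter Topology

section OrderedField

variable {K : Type*} [Field K] [LinearOrder K] [IsStrictOrderedRing K] [TopologicalSpace K]
  [OrderTopology K]

lemma mem_closure_pos_of_odd_rootMultiplicity {p : K[X]} {a : K}
    (hodd : Odd (p.rootMultiplicity a)) : a ∈ closure {t | 0 < p.eval t} := by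
  have hp : p ≠ 0 := by
    rintro rfl
    simp at hodd
  obtain ⟨r, hpr, hr⟩ := p.exists_eq_pow_rootMultiplicity_mul_and_not_dvd hp a
  have eval_eq (t : K) : p.eval t = (t - a) ^ p.rootMultiplicity a * r.eval t := by
    conv_lhs => rw [hpr]
    simp only [eval_mul, eval_pow, eval_sub, eval_X, eval_C]
  have hra : r.eval a ≠ 0 := fun h ↦ hr (dvd_iff_isRoot.2 h)
  by_contra hcl
  have hle : ∀ᶠ t in 𝓝 a, (t - a) ^ p.rootMultiplicity a * r.eval t ≤ 0 := by
    simpa only [mem_closure_iff_frequently, not_frequently, Set.mem_ofPred_eq, not_lt, eval_eq]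
      using hcl
  have hright : ∀ᶠ t in 𝓝[>] a, r.eval t ≤ 0 := by
    filter_upwards [hle.filter_mono nhdsWithin_le_nhds, self_mem_nhdsWithin] with t ht hat
    exact nonpos_of_mul_nonpos_right ht (pow_pos (sub_pos.2 hat) _)
  have hleft : ∀ᶠ t in 𝓝[<] a, 0 ≤ r.eval t := by
    filter_upwards [hle.filter_mono nhdsWithin_le_nhds, self_mem_nhdsWithin] with t ht hta
    exact nonneg_of_mul_nonpos_right ht (hodd.pow_neg (sub_neg.2 hta))
  exact hra <| le_antisymm
    (le_of_tendsto r.continuous.continuousWithinAt hright)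
    (ge_of_tendsto r.continuous.continuousWithinAt hleft)

lemma pos_subset_closure_pos_of_mul_nonneg {p q : K[X]} (hp : p ≠ 0)
    (hpq : ∀ t, 0 ≤ p.eval t * q.eval t) :
    {t | 0 < q.eval t} ⊆ closure {t | 0 < p.eval t} := by
  have hopen : IsOpen {t | 0 < q.eval t} := isOpen_lt continuous_const q.continuous
  have hdense : Dense (Set.univ \ {t | p.IsRoot t}) :=
    dense_univ.sdiff_finite (finite_setOfPred_isRoot hp)
  refine (hdense.open_subset_closure_inter hopen).trans (closure_mono ?_)
  rintro t ⟨hqt, -, hpt⟩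
  exact (nonneg_of_mul_nonneg_left (hpq t) hqt).lt_of_ne' hpt

end OrderedField

lemma exists_isRoot_of_eval_neg {p : ℝ[X]} {t : ℝ} (hlc : 0 ≤ p.leadingCoeff)
    (ht : p.eval t < 0) : ∃ a, p.IsRoot a := by
  have hdeg : 0 < p.degree := by
    by_contra! h
    rw [eq_C_of_degree_le_zero h] at hlc ht
    simp only [leadingCoeff_C, eval_C] at hlc ht
    exact ht.not_ge hlc
  obtain ⟨s, hs⟩ :=
    ((p.tendsto_atTop_of_leadingCoeff_nonneg hdeg hlc).eventually_ge_atTop 0).exists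
  exact mem_range_of_exists_le_of_exists_ge p.continuous ⟨t, ht.le⟩ ⟨s, hs⟩

lemma eval_nonneg_of_roots_eq_zero {p : ℝ[X]} (hlc : 0 ≤ p.leadingCoeff) (hroots : p.roots = 0)
    (t : ℝ) : 0 ≤ p.eval t := by
  by_contra! ht
  obtain ⟨a, ha⟩ := exists_isRoot_of_eval_neg hlc ht
  have hp : p ≠ 0 := by
    rintro rfl
    simp at ht
  simpa only [hroots, Multiset.notMem_zero] using (mem_roots hp).2 ha

lemma eval_nonneg_of_even_rootMultiplicity {p : ℝ[X]} (hlc : 0 ≤ p.leadingCoeff)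
    (heven : ∀ a, Even (p.rootMultiplicity a)) (t : ℝ) : 0 ≤ p.eval t := by
  obtain ⟨r, hpr, -, hr⟩ := p.exists_prod_multiset_X_sub_C_mul
  have hlr : r.leadingCoeff = p.leadingCoeff := by
    conv_rhs => rw [← hpr, leadingCoeff_mul, monic_multisetProd_X_sub_C, one_mul]
  rw [← hpr, eval_mul, Finset.prod_multiset_map_count, eval_prod]
  refine mul_nonneg (Finset.prod_nonneg fun a _ ↦ ?_)
    (eval_nonneg_of_roots_eq_zero (hlr ▸ hlc) hr t)
  rw [count_roots, eval_pow]
  exact (heven a).pow_nonneg _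

lemma eval_mul_eval_nonneg_of_odd_rootMultiplicity_iff {p q : ℝ[X]}
    (hlc : 0 < p.leadingCoeff * q.leadingCoeff)
    (hodd : ∀ a, Odd (p.rootMultiplicity a) ↔ Odd (q.rootMultiplicity a)) (t : ℝ) :
    0 ≤ p.eval t * q.eval t := by
  rw [← leadingCoeff_mul] at hlc
  rw [← eval_mul]
  refine eval_nonneg_of_even_rootMultiplicity hlc.le (fun a ↦ ?_) t
  rw [rootMultiplicity_mul (leadingCoeff_ne_zero.1 hlc.ne'), Nat.even_add']
  exact hodd a

lemma HasOnlySimpleComplexRoots.odd_rootMultiplicity {p : ℝ[X]} (hp : HasOnlySimpleComplexRoots p)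
    {a : ℝ} (ha : p.IsRoot a) : Odd (p.rootMultiplicity a) := by
  have hle : p.rootMultiplicity a ≤ 1 := by
    rw [eq_rootMultiplicity_map (algebraMap ℝ ℂ).injective]
    exact hp.2 _
  rw [hle.antisymm ((rootMultiplicity_pos hp.1).2 ha)]
  exact odd_one

lemma isRoot_iff_odd_rootMultiplicity_of_aeval {A B : Type*} [CommRing A] [IsDomain A] [CommRing B]
    [Nontrivial B] [Algebra A B] [Module.IsTorsionFree A B] {p q : A[X]}
    (h : ∀ b : B, aeval b q = 0 ↔ Odd ((p.map (algebraMap A B)).rootMultiplicity b)) (a : A) :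
    q.IsRoot a ↔ Odd (p.rootMultiplicity a) := by
  rw [eq_rootMultiplicity_map (FaithfulSMul.algebraMap_injective A B), ← h,
    aeval_algebraMap_eq_zero_iff, coe_aeval_eq_eval, IsRoot.def]

theorem closure_pos_set_eq_odd_part_nonneg_general {p q : ℝ[X]}
    (hlc : 0 < p.leadingCoeff * q.leadingCoeff)
    (hodd : ∀ a, q.IsRoot a → Odd (q.rootMultiplicity a))
    (hroots : ∀ a, q.IsRoot a ↔ Odd (p.rootMultiplicity a)) :
    closure {t : ℝ | 0 < p.eval t} = {t : ℝ | 0 ≤ q.eval t} := by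
  have hp : p ≠ 0 := leadingCoeff_ne_zero.1 (left_ne_zero_of_mul hlc.ne')
  have hq : q ≠ 0 := leadingCoeff_ne_zero.1 (right_ne_zero_of_mul hlc.ne')
  have hpq : ∀ t, 0 ≤ p.eval t * q.eval t :=
    eval_mul_eval_nonneg_of_odd_rootMultiplicity_iff hlc fun a ↦
      (hroots a).symm.trans ⟨hodd a, fun h ↦ (rootMultiplicity_pos hq).1 h.pos⟩
  apply Set.Subset.antisymm
  · exact closure_minimal (fun t ht ↦ nonneg_of_mul_nonneg_right (hpq t) ht)
      (isClosed_le continuous_const q.continuous)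
  · intro t ht
    rcases (show 0 ≤ q.eval t from ht).lt_or_eq with hpos | hzero
    · exact pos_subset_closure_pos_of_mul_nonneg hp hpq hpos
    · exact mem_closure_pos_of_odd_rootMultiplicity ((hroots t).1 hzero.symm)

/-- Let `p ∈ ℝ[t]` have positive degree and let `p̃ ∈ ℝ[t]` be
squarefree, with the same leading coefficient as `p`, whose complex roots are exactly
the roots of `p` of odd multiplicity.  Then the closure of `{t : p(t) > 0}` is
`{t : p̃(t) ≥ 0}`. -/
theorem closure_pos_set_eq_odd_part_nonneg
    (p pt : Polynomial ℝ) (hdeg : 0 < p.degree)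
    (hsf : HasOnlySimpleComplexRoots pt)
    (hlc : pt.leadingCoeff = p.leadingCoeff)
    (hroots : ∀ a : ℂ, Polynomial.aeval a pt = 0 ↔
      Odd ((p.map (algebraMap ℝ ℂ)).rootMultiplicity a)) :
    closure {t : ℝ | 0 < p.eval t} = {t : ℝ | 0 ≤ pt.eval t} := by
  have hlc_mul : 0 < p.leadingCoeff * pt.leadingCoeff := by
    rw [hlc]
    exact mul_self_pos.2 (leadingCoeff_ne_zero.2 (ne_zero_of_degree_gt hdeg))
  exact closure_pos_set_eq_odd_part_nonneg_general hlc_mul (fun _ ↦ hsf.odd_rootMultiplicity)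
    (isRoot_iff_odd_rootMultiplicity_of_aeval hroots)
end

section
/- Let B ⊆ ℝ be an elementary semi-algebraic set, i.e., B = {t ∈ ℝ : p_1(t) > 0, …, p_m(t) > 0, q_1(t) = ⋯ = q_l(t) = 0} for some univariate real polynomials p_i, q_j. Then there exist finitely many pairs of finite families (P_1, Q_1), …, (P_s, Q_s) of univariate real polynomials such that B = ⋃_{r=1}^{s} B_r, where B_r = {t ∈ ℝ : p(t) > 0 for all p ∈ P_r, and q(t) = 0 for all q ∈ Q_r}, and for each r the following hold: (1) every p ∈ P_r is squarefree; (2) if Q_r is nonempty, then no p ∈ P_r has a real root a with q(a) = 0 for all q ∈ Q_r; and (3) any two distinct members of P_r have no common complex root. -/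
open Polynomial

/-!
Factor all the given polynomials into monic irreducibles. Whether a point satisfies the given
conditions depends only on the signs of these irreducible factors there, so the set is a finite
union of cells on which every factor `f` has a prescribed sign `σ f`. Such a cell is cut out by the
inequalities `σ f * f > 0` for `σ f ≠ 0` and the equations `f = 0` for `σ f = 0`; irreducible
polynomials in characteristic zero are separable, and distinct monic ones are coprime.
-/

section CommRing

open SignType Function

variable {R ι κ : Type*} [CommRing R]

/-- The normal form for a system `P i > 0`, `Q j = 0` of sign conditions. Separability and
coprimality express simple and disjoint roots in every field extension at once. -/
structure IsReducedSystem (P : ι → R[X]) (Q : κ → R[X]) : Prop where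
  separable : ∀ i, (P i).Separable
  isCoprime : ∀ i j, IsCoprime (P i) (Q j)
  pairwise_isCoprime : Pairwise (IsCoprime on P)

theorem IsReducedSystem.comp {ι' κ' : Type*} {P : ι → R[X]} {Q : κ → R[X]}
    (h : IsReducedSystem P Q) {e : ι' → ι} (he : Injective e) (e' : κ' → κ) :
    IsReducedSystem (P ∘ e) (Q ∘ e') where
  separable i := h.separable (e i)
  isCoprime i j := h.isCoprime (e i) (e' j)
  pairwise_isCoprime := h.pairwise_isCoprime.comp_of_injective he

/-- The members of `f` required to be nonzero by the sign vector `σ`, with their prescribed signs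
absorbed so that each condition becomes a strict positivity. -/
noncomputable def signInequalities (f : ι → R[X]) (σ : ι → SignType) : {i // σ i ≠ 0} → R[X] :=
  fun i ↦ C (σ i : R) * f i

/-- The members of `f` required to vanish by the sign vector `σ`. -/
def signEquations (f : ι → R[X]) (σ : ι → SignType) : {i // σ i = 0} → R[X] :=
  fun j ↦ f j

theorem isUnit_C_coe_sign {s : SignType} (hs : s ≠ 0) : IsUnit (C (s : R)) := by
  rcases s.trichotomy with rfl | rfl | rfl
  · simp
  · exact absurd rfl hs
  · simp

theorem isReducedSystem_sign {f : ι → R[X]} (hsep : ∀ i, (f i).Separable)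
    (hcop : Pairwise (IsCoprime on f)) (σ : ι → SignType) :
    IsReducedSystem (signInequalities f σ) (signEquations f σ) where
  separable i := (hsep i).unit_mul (isUnit_C_coe_sign i.2)
  isCoprime i j := (isCoprime_mul_unit_left_left (isUnit_C_coe_sign i.2) _ _).2
    (hcop fun hij ↦ i.2 (hij ▸ j.2))
  pairwise_isCoprime i j hij :=
    (isCoprime_mul_units_left (isUnit_C_coe_sign i.2) (isUnit_C_coe_sign j.2) _ _).2
      (hcop (Subtype.coe_ne_coe.2 hij))

theorem not_exists_common_root_of_isCoprime [Nontrivial R] [Nonempty κ] {p : R[X]}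
    {Q : κ → R[X]} (h : ∀ j, IsCoprime p (Q j)) :
    ¬∃ a : R, p.eval a = 0 ∧ ∀ j, (Q j).eval a = 0 := fun ⟨a, hp, hQ⟩ ↦
  have ⟨j⟩ := ‹Nonempty κ›
  (aeval_ne_zero_of_isCoprime (h j) a).elim (· hp) (· (hQ j))

variable [LinearOrder R]

/-- The elementary semi-algebraic set of the solutions of the system `P i > 0`, `Q j = 0`. -/
def elementarySet (P : ι → R[X]) (Q : κ → R[X]) : Set R :=
  {t | (∀ i, 0 < (P i).eval t) ∧ ∀ j, (Q j).eval t = 0}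

theorem elementarySet_comp_surjective {ι' κ' : Type*} (P : ι → R[X]) (Q : κ → R[X])
    {e : ι' → ι} (he : Surjective e) {e' : κ' → κ} (he' : Surjective e') :
    elementarySet (P ∘ e) (Q ∘ e') = elementarySet P Q := by
  ext t
  exact and_congr (he.forall (p := fun i ↦ 0 < (P i).eval t)).symm
    (he'.forall (p := fun j ↦ (Q j).eval t = 0)).symm

theorem IsReducedSystem.exists_fin [Finite ι] [Finite κ] {P : ι → R[X]} {Q : κ → R[X]}
    (h : IsReducedSystem P Q) :
    ∃ (m l : ℕ) (P' : Fin m → R[X]) (Q' : Fin l → R[X]),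
      elementarySet P Q = elementarySet P' Q' ∧ IsReducedSystem P' Q' :=
  let eι := (Finite.equivFin ι).symm
  let eκ := (Finite.equivFin κ).symm
  ⟨_, _, P ∘ eι, Q ∘ eκ, (elementarySet_comp_surjective P Q eι.surjective eκ.surjective).symm,
    h.comp eι.injective eκ⟩

/-- The signs at the point `t` of the members of a family of polynomials. -/
def signVector (f : ι → R[X]) (t : R) : ι → SignType :=
  fun i ↦ sign ((f i).eval t)

theorem mem_elementarySet_iff_signVector {P : ι → R[X]} {Q : κ → R[X]} {t : R} :
    t ∈ elementarySet P Q ↔ signVector P t = 1 ∧ signVector Q t = 0 := by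
  simp only [elementarySet, signVector, Set.mem_ofPred_eq, funext_iff, Pi.one_apply,
    Pi.zero_apply, sign_eq_one_iff, sign_eq_zero_iff]

variable [IsStrictOrderedRing R]

theorem sign_coe_mul_pos_iff {s : SignType} (hs : s ≠ 0) {x : R} :
    0 < (s : R) * x ↔ sign x = s := by
  rcases s.trichotomy with rfl | rfl | rfl
  · simp [sign_eq_neg_one_iff]
  · exact absurd rfl hs
  · simp [sign_eq_one_iff]

theorem elementarySet_sign (f : ι → R[X]) (σ : ι → SignType) :
    elementarySet (signInequalities f σ) (signEquations f σ) = signVector f ⁻¹' {σ} := by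
  ext t
  have inequality_iff (i : {i // σ i ≠ 0}) :
      0 < (signInequalities f σ i).eval t ↔ signVector f t i = σ i := by
    simp only [signInequalities, eval_mul, eval_C, sign_coe_mul_pos_iff i.2, signVector]
  have equation_iff (j : {i // σ i = 0}) :
      (signEquations f σ j).eval t = 0 ↔ signVector f t j = σ j := by
    simp only [signEquations, signVector, j.2, sign_eq_zero_iff]
  simp only [elementarySet, Set.mem_ofPred_eq, inequality_iff, equation_iff, Subtype.forall,
    Set.mem_preimage, Set.mem_singleton_iff, funext_iff]
  exact ⟨fun h i ↦ (em (σ i = 0)).elim (h.2 i) (h.1 i), fun h ↦ ⟨fun i _ ↦ h i, fun j _ ↦ h j⟩⟩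

end CommRing

section Field

open UniqueFactorizationMonoid Function

variable {K ι : Type*} [Field K]

theorem isCoprime_of_monic_irreducible_of_ne {f g : K[X]} (hf : Irreducible f) (hfm : f.Monic)
    (hg : Irreducible g) (hgm : g.Monic) (hfg : f ≠ g) : IsCoprime f g :=
  hf.coprime_iff_not_dvd.2 fun hdvd ↦
    hfg (eq_of_monic_of_associated hfm hgm (hf.associated_of_dvd hg hdvd))

variable [DecidableEq K]

/-- The set of monic irreducible factors of the members of a family of polynomials; a zero
polynomial contributes none. -/
def irreducibleFactors (p : ι → K[X]) : Set K[X] :=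
  ⋃ i, {f | f ∈ normalizedFactors (p i)}

theorem finite_irreducibleFactors [Finite ι] (p : ι → K[X]) : (irreducibleFactors p).Finite :=
  Set.finite_iUnion fun i ↦ (normalizedFactors (p i)).finite_toSet

theorem irreducible_of_mem_irreducibleFactors {p : ι → K[X]} {f : K[X]}
    (hf : f ∈ irreducibleFactors p) : Irreducible f :=
  have ⟨_, hi⟩ := Set.mem_iUnion.1 hf
  irreducible_of_normalized_factor f hi

theorem monic_of_mem_irreducibleFactors {p : ι → K[X]} {f : K[X]}
    (hf : f ∈ irreducibleFactors p) : f.Monic :=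
  have ⟨_, hi⟩ := Set.mem_iUnion.1 hf
  (normalize_eq_self_iff_monic (irreducible_of_mem_irreducibleFactors hf).ne_zero).1
    (normalize_normalized_factor f hi)

theorem pairwise_isCoprime_irreducibleFactors (p : ι → K[X]) :
    Pairwise (IsCoprime on ((↑) : irreducibleFactors p → K[X])) := fun f g hfg ↦
  isCoprime_of_monic_irreducible_of_ne
    (irreducible_of_mem_irreducibleFactors f.2) (monic_of_mem_irreducibleFactors f.2)
    (irreducible_of_mem_irreducibleFactors g.2) (monic_of_mem_irreducibleFactors g.2)
    (Subtype.coe_ne_coe.2 hfg)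

end Field

section OrderedField

open UniqueFactorizationMonoid SignType Function

variable {K ι κ : Type*} [Field K] [LinearOrder K] [IsStrictOrderedRing K]

theorem sign_eval_eq_prod_normalizedFactors (p : K[X]) (t : K) :
    sign (p.eval t) =
      sign p.leadingCoeff * ((normalizedFactors p).map fun f ↦ sign (f.eval t)).prod := by
  conv_lhs => rw [← leadingCoeff_mul_prod_normalizedFactors p, eval_mul, eval_C, sign_mul,
    eval_multiset_prod]
  congr 1
  exact Multiset.prod_hom' (normalizedFactors p) (signHom (α := K)) (eval t) |>.symm

theorem signVector_eq_of_irreducibleFactors {p : ι → K[X]} {t u : K}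
    (h : signVector ((↑) : irreducibleFactors p → K[X]) t = signVector (↑) u) :
    signVector p t = signVector p u := by
  ext i
  have sign_factor_eq (f : K[X]) (hf : f ∈ normalizedFactors (p i)) :
      sign (f.eval t) = sign (f.eval u) :=
    congrFun h ⟨f, Set.mem_iUnion.2 ⟨i, hf⟩⟩
  rw [signVector, signVector, sign_eval_eq_prod_normalizedFactors _ t,
    sign_eval_eq_prod_normalizedFactors _ u, Multiset.map_congr rfl sign_factor_eq]

theorem elementarySet_eq_iUnion_preimage_signVector (p : ι → K[X]) (q : κ → K[X]) :
    let f : irreducibleFactors (Sum.elim p q) → K[X] := (↑)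
    elementarySet p q = ⋃ σ : signVector f '' elementarySet p q, signVector f ⁻¹' {σ.1} := by
  intro f
  refine Set.Subset.antisymm
    (fun t ht ↦ Set.mem_iUnion.2 ⟨⟨_, Set.mem_image_of_mem _ ht⟩, rfl⟩)
    (Set.iUnion_subset fun ⟨σ, u, hu, huσ⟩ t htσ ↦ ?_)
  have sign_eq : signVector (Sum.elim p q) t = signVector (Sum.elim p q) u :=
    signVector_eq_of_irreducibleFactors (htσ.trans huσ.symm)
  have sign_left_eq : signVector p t = signVector p u :=
    funext fun i ↦ congrFun sign_eq (.inl i)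
  have sign_right_eq : signVector q t = signVector q u :=
    funext fun j ↦ congrFun sign_eq (.inr j)
  rwa [mem_elementarySet_iff_signVector, sign_left_eq, sign_right_eq,
    ← mem_elementarySet_iff_signVector]

theorem decompose_elementary_semialgebraic_general [Finite ι] [Finite κ]
    (p : ι → K[X]) (q : κ → K[X]) :
    ∃ (s : ℕ) (mr lr : Fin s → ℕ) (P : (r : Fin s) → Fin (mr r) → K[X])
      (Q : (r : Fin s) → Fin (lr r) → K[X]),
      elementarySet p q = ⋃ r, elementarySet (P r) (Q r) ∧
      ∀ r, IsReducedSystem (P r) (Q r) := by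
  let f : irreducibleFactors (Sum.elim p q) → K[X] := (↑)
  have : Finite (irreducibleFactors (Sum.elim p q)) := finite_irreducibleFactors _
  have separable_factor (g) : (f g).Separable :=
    (irreducible_of_mem_irreducibleFactors g.2).separable
  let e := (Finite.equivFin (signVector f '' elementarySet p q)).symm
  choose mr lr P Q hPQ hred using fun r ↦ (isReducedSystem_sign separable_factor
    (pairwise_isCoprime_irreducibleFactors _) (e r)).exists_fin
  refine ⟨_, mr, lr, P, Q, ?_, hred⟩
  simp only [← hPQ, elementarySet_sign]
  exact (elementarySet_eq_iUnion_preimage_signVector p q).trans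
    (e.surjective.iUnion_comp fun σ ↦ signVector f ⁻¹' {σ.1}).symm

end OrderedField

theorem hasOnlySimpleComplexRoots_of_separable {p : ℝ[X]} (hp : p.Separable) :
    HasOnlySimpleComplexRoots p :=
  ⟨hp.ne_zero, rootMultiplicity_le_one_of_separable hp.map⟩

theorem not_hasCommonComplexRoot_of_isCoprime {p q : ℝ[X]} (h : IsCoprime p q) :
    ¬HasCommonComplexRoot p q := fun ⟨a, hp, hq⟩ ↦
  (aeval_ne_zero_of_isCoprime h a).elim (· hp) (· hq)

/-- Every elementary semi-algebraic subset `B` of `ℝ` is a finite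
union of elementary semi-algebraic sets `B_r`, cut out by finite families `P_r`
(strict inequalities) and `Q_r` (equations), such that each member of `P_r` is
squarefree, if `Q_r` is nonempty then no member of `P_r` has a real root in the
variety of `Q_r`, and no two distinct members of `P_r` have a common complex root. -/
theorem decompose_elementary_semialgebraic
    (m l : ℕ) (p : Fin m → Polynomial ℝ) (q : Fin l → Polynomial ℝ)
    (B : Set ℝ)
    (hB : B = {t | (∀ i, 0 < (p i).eval t) ∧ ∀ j, (q j).eval t = 0}) :
    ∃ (s : ℕ) (mr lr : Fin s → ℕ)
      (P : (r : Fin s) → Fin (mr r) → Polynomial ℝ)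
      (Q : (r : Fin s) → Fin (lr r) → Polynomial ℝ),
      (B = ⋃ r, {t : ℝ | (∀ i, 0 < (P r i).eval t) ∧ ∀ j, (Q r j).eval t = 0}) ∧
      ∀ r : Fin s,
        (∀ i, HasOnlySimpleComplexRoots (P r i)) ∧
        (0 < lr r → ∀ i, ¬ ∃ a : ℝ, (P r i).eval a = 0 ∧ ∀ j, (Q r j).eval a = 0) ∧
        (∀ i j, i ≠ j → ¬ HasCommonComplexRoot (P r i) (P r j)) := by
  obtain ⟨s, mr, lr, P, Q, hPQ, hred⟩ := decompose_elementary_semialgebraic_general p q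
  exact ⟨s, mr, lr, P, Q, hB.trans hPQ, fun r ↦
    ⟨fun i ↦ hasOnlySimpleComplexRoots_of_separable ((hred r).separable i),
    fun hlr i ↦ have := Fin.pos_iff_nonempty.1 hlr
      not_exists_common_root_of_isCoprime ((hred r).isCoprime i),
    fun _ _ hij ↦ not_hasCommonComplexRoot_of_isCoprime ((hred r).pairwise_isCoprime hij)⟩⟩
end

section
/- Let n, N ∈ ℕ, let f be a real polynomial in n variables, and for each u = 1, …, N let P_{1,u}, …, P_{m_u,u} and Q_{1,u}, …, Q_{l_u,u} be real polynomials in n variables; set S = ⋃_{u=1}^{N} {x ∈ ℝⁿ : P_{i,u}(x) > 0 for all i, and Q_{k,u}(x) = 0 for all k}. Then there exist w ∈ ℕ and, for each j = 1, …, w, finite families of univariate real polynomials g_{1,j}, …, g_{v_j,j} and h_{1,j}, …, h_{k_j,j} such that the closure of the image f(S) = {f(x) : x ∈ S} in ℝ equals ⋃_{j=1}^{w} {t ∈ ℝ : g_{1,j}(t) ≥ 0, …, g_{v_j,j}(t) ≥ 0, h_{1,j}(t) = ⋯ = h_{k_j,j}(t) = 0}, where each g_{i,j} is squarefree and, for each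 j, any two distinct polynomials among g_{1,j}, …, g_{v_j,j} have no common complex root. -/
open Polynomial

/-!
Membership in `S` depends only on the signs of finitely many polynomials, and the point is that the
same holds for `f(S)`, whose membership then depends only on the signs of finitely many univariate
polynomials; `f(S)` is therefore a finite union of intervals, and the closure of an interval is cut
out by at most two polynomials of degree one.

Elimination of variables follows Cohen and Hörmander. For a finite family of polynomials over a
ring `A`, close it up under removing leading terms and under taking derivatives and
pseudo-remainders. If two ring homomorphisms `A → ℝ` give the same signs to all leading
coefficients in the closed family, then there is an order isomorphism of the line that carries the
signs of every polynomial specialised along the first homomorphism to those of the same polynomial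
specialised along the second. It is constructed by treating the polynomials in order of increasing
degree. Between neighbouring zeros of the earlier polynomials a new one is strictly monotone, its
derivative being among them, and at these zeros its sign is that of a pseudo-remainder, so the
isomorphism need only be corrected inside the gaps, to match the new zeros. Eliminating the
variables of `ℝⁿ` one at a time from the given polynomials together with `f - t` leaves finitely
many polynomials in `t` whose signs decide whether `t ∈ f(S)`.
-/

open Set Filter SignType

theorem surjective_of_continuous_of_eqOn_compl_Ioo {f : ℝ → ℝ} (hf : Continuous f) {a b : ℝ}
    (hfix : ∀ t ∉ Ioo a b, f t = t) : Function.Surjective f :=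
  hf.surjective
    (tendsto_id.congr' ((eventually_ge_atTop b).mono fun t ht =>
      (hfix t fun h => h.2.not_ge ht).symm))
    (tendsto_id.congr' ((eventually_le_atBot a).mono fun t ht =>
      (hfix t fun h => h.1.not_ge ht).symm))

theorem exists_orderIso_apply_eq {a b x x' : ℝ} (hx : x ∈ Ioo a b) (hx' : x' ∈ Ioo a b) :
    ∃ ρ : ℝ ≃o ℝ, ρ x = x' ∧ ∀ t ∉ Ioo a b, ρ t = t := by
  wlog hxx' : x ≤ x' generalizing x x'
  · obtain ⟨ρ, hρ, hfix⟩ := this hx' hx (le_of_not_ge hxx')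
    exact ⟨ρ.symm, by simp [← hρ], fun t ht => by simp [ρ.symm_apply_eq, hfix t ht]⟩
  have hax : 0 < x - a := sub_pos.2 hx.1
  have hxb : 0 < b - x := sub_pos.2 hx.2
  set m := (x' - a) / (x - a) with hm
  set k := (b - x') / (b - x) with hk
  have hm1 : 1 ≤ m := (one_le_div hax).2 (by linarith)
  have hk0 : 0 < k := div_pos (sub_pos.2 hx'.2) hxb
  have hk1 : k ≤ 1 := (div_le_one hxb).2 (by linarith)
  -- The graph of `ρ` is the broken line `(a, a)`, `(x, x')`, `(b, b)`, extended by the diagonal.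
  let ρ : ℝ → ℝ := fun t => max t (min (a + m * (t - a)) (b + k * (t - b)))
  have hmono : StrictMono ρ := fun s t hst =>
    max_lt_max hst (min_lt_min (by nlinarith) (by nlinarith))
  have hfix : ∀ t ∉ Ioo a b, ρ t = t := by
    intro t ht
    refine max_eq_left ?_
    rcases le_or_gt t a with hta | hat
    · exact min_le_of_left_le (by nlinarith)
    · have hbt : b ≤ t := not_lt.1 fun htb => ht ⟨hat, htb⟩
      exact min_le_of_right_le (by nlinarith)
  have hsurj := surjective_of_continuous_of_eqOn_compl_Ioo (f := ρ) (by fun_prop) hfix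
  refine ⟨hmono.orderIsoOfSurjective ρ hsurj, ?_, hfix⟩
  have hleft : a + m * (x - a) = x' := by rw [hm, div_mul_cancel₀ _ hax.ne']; ring
  have hright : b + k * (x - b) = x' := by
    rw [hk, ← neg_sub b x, mul_neg, div_mul_cancel₀ _ hxb.ne']; ring
  simp [ρ, hleft, hright, hxx']

theorem exists_orderIso_glue {α β : Type*} [LinearOrder α] [LinearOrder β] {θ ζ η : α ≃o β} {u : α}
    (hη : ∀ y, u ≤ y → η y = θ y) (hζ : ∀ y ≤ u, ζ y = θ y) :
    ∃ ξ : α ≃o β, (∀ y ≤ u, ξ y = η y) ∧ ∀ y, u ≤ y → ξ y = ζ y := by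
  refine ⟨ζ.trans (θ.symm.trans η), fun y hy => by simp [hζ y hy], fun y hy => ?_⟩
  have hu : u ≤ θ.symm (ζ y) := by
    rw [θ.le_symm_apply, ← hζ u le_rfl]
    exact ζ.monotone hy
  simp [hη _ hu]

theorem exists_orderIso_of_gaps {α β : Type*} [LinearOrder α] [LinearOrder β]
    {P : α → β → Prop} (θ : α ≃o β) {Z : Finset α} (hZ : Z.Nonempty)
    (hmem : ∀ y ∈ Z, P y (θ y))
    (hlower : ∀ y ∈ lowerBounds (Z : Set α), P y (θ y))
    (hupper : ∀ y ∈ upperBounds (Z : Set α), P y (θ y))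
    (hgap : ∀ u ∈ Z, ∀ v ∈ Z, u < v → (∀ z ∈ Z, z ∉ Ioo u v) →
      ∃ η : α ≃o β, (∀ y ∉ Ioo u v, η y = θ y) ∧ ∀ y ∈ Ioo u v, P y (η y)) :
    ∃ η : α ≃o β, ∀ y, P y (η y) := by
  suffices key : ∀ v : Z, ∃ η : α ≃o β, (∀ y, v.1 ≤ y → η y = θ y) ∧ ∀ y ≤ v.1, P y (η y) by
    obtain ⟨η, hηθ, hη⟩ := key ⟨_, Z.max'_mem hZ⟩
    refine ⟨η, fun y => ?_⟩
    rcases le_total y (Z.max' hZ) with hy | hy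
    · exact hη y hy
    · rw [hηθ y hy]
      exact hupper y fun z hz => (Z.le_max' z hz).trans hy
  intro v
  induction v using WellFoundedLT.induction with
  | ind v ih =>
  by_cases hne : (Z.filter (· < v.1)).Nonempty
  · obtain ⟨u, hu⟩ := (Z.filter (· < v.1)).exists_maximal hne
    obtain ⟨huZ, huv⟩ := Finset.mem_filter.1 hu.prop
    obtain ⟨ζ, hζθ, hζ⟩ := hgap u huZ v v.2 huv fun z hz hzuv =>
      (hu.not_prop_of_gt hzuv.1) (Finset.mem_filter.2 ⟨hz, hzuv.2⟩)
    obtain ⟨η, hηθ, hη⟩ := ih ⟨u, huZ⟩ huv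
    obtain ⟨ξ, hleft, hright⟩ := exists_orderIso_glue hηθ fun y hy => hζθ y fun h => h.1.not_ge hy
    refine ⟨ξ, fun y hy => ?_, fun y hy => ?_⟩
    · rw [hright y (huv.le.trans hy), hζθ y fun h => h.2.not_ge hy]
    · rcases le_or_gt y u with hyu | huy
      · rw [hleft y hyu]
        exact hη y hyu
      rw [hright y huy.le]
      rcases hy.lt_or_eq with hyv | rfl
      · exact hζ y ⟨huy, hyv⟩
      · rw [hζθ _ fun h => h.2.false]
        exact hmem _ v.2
  · refine ⟨θ, fun _ _ => rfl, fun y hy => hlower y fun z hz => hy.trans ?_⟩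
    exact not_lt.1 fun hzv => hne ⟨z, Finset.mem_filter.2 ⟨hz, hzv⟩⟩

theorem sign_eq_of_isPreconnected {X : Type*} [TopologicalSpace X] {s : Set X}
    (hs : IsPreconnected s) {f : X → ℝ} (hf : ContinuousOn f s) (hne : ∀ z ∈ s, f z ≠ 0) {x y : X}
    (hx : x ∈ s) (hy : y ∈ s) : sign (f x) = sign (f y) :=
  hs.constant (f := fun z => sign (f z)) (fun z hz =>
    (continuousAt_sign_of_ne_zero (hne z hz)).comp_continuousWithinAt (hf z hz)) hx hy

theorem sign_eval_eq_of_ordConnected {s : Set ℝ} (hs : s.OrdConnected) {p : ℝ[X]}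
    (hne : ∀ z ∈ s, p.eval z ≠ 0) {x y : ℝ} (hx : x ∈ s) (hy : y ∈ s) :
    sign (p.eval x) = sign (p.eval y) :=
  sign_eq_of_isPreconnected hs.isPreconnected p.continuous.continuousOn hne hx hy

theorem sign_eq_of_strictMonoOn_of_eq_zero {α β : Type*} [LinearOrder α] [LinearOrder β]
    {f : α → ℝ} {g : β → ℝ} {s : Set α} {t : Set β} (hf : StrictMonoOn f s)
    (hg : StrictMonoOn g t) {η : α ≃o β} (hη : MapsTo η s t) {c y : α} (hc : c ∈ s) (hy : y ∈ s)
    (hfc : f c = 0) (hgc : g (η c) = 0) : sign (f y) = sign (g (η y)) := by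
  rcases lt_trichotomy y c with h | rfl | h
  · rw [sign_neg (hfc ▸ hf hy hc h), sign_neg (hgc ▸ hg (hη hy) (hη hc) (η.strictMono h))]
  · rw [hfc, hgc]
  · rw [sign_pos (hfc ▸ hf hc hy h), sign_pos (hgc ▸ hg (hη hc) (hη hy) (η.strictMono h))]

theorem exists_orderIso_sign_eq_of_strictMonoOn {f g : ℝ → ℝ} {u v : ℝ} (θ : ℝ ≃o ℝ) (huv : u < v)
    (hf : ContinuousOn f (Icc u v)) (hg : ContinuousOn g (Icc (θ u) (θ v)))
    (hfm : StrictMonoOn f (Icc u v)) (hgm : StrictMonoOn g (Icc (θ u) (θ v)))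
    (hu : sign (f u) = sign (g (θ u))) (hv : sign (f v) = sign (g (θ v))) :
    ∃ η : ℝ ≃o ℝ, (∀ y ∉ Ioo u v, η y = θ y) ∧ ∀ y ∈ Ioo u v, sign (f y) = sign (g (η y)) := by
  have hθ : MapsTo θ (Icc u v) (Icc (θ u) (θ v)) := θ.monotone.mapsTo_Icc
  have hul : u ∈ Icc u v := left_mem_Icc.2 huv.le
  have hvr : v ∈ Icc u v := right_mem_Icc.2 huv.le
  rcases le_or_gt 0 (f u) with hfu | hfu
  · have hgu : 0 ≤ g (θ u) := by rwa [← sign_nonneg_iff, ← hu, sign_nonneg_iff]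
    refine ⟨θ, fun _ _ => rfl, fun y hy => ?_⟩
    have hyI := Ioo_subset_Icc_self hy
    rw [sign_pos (hfu.trans_lt (hfm hul hyI hy.1)),
      sign_pos (hgu.trans_lt (hgm (hθ hul) (hθ hyI) (θ.strictMono hy.1)))]
  rcases le_or_gt (f v) 0 with hfv | hfv
  · have hgv : g (θ v) ≤ 0 := by rwa [← sign_nonpos_iff, ← hv, sign_nonpos_iff]
    refine ⟨θ, fun _ _ => rfl, fun y hy => ?_⟩
    have hyI := Ioo_subset_Icc_self hy
    rw [sign_neg ((hfm hyI hvr hy.2).trans_le hfv),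
      sign_neg ((hgm (hθ hyI) (hθ hvr) (θ.strictMono hy.2)).trans_le hgv)]
  have hgu : g (θ u) < 0 := by rwa [← sign_eq_neg_one_iff, ← hu, sign_eq_neg_one_iff]
  have hgv : 0 < g (θ v) := by rwa [← sign_eq_one_iff, ← hv, sign_eq_one_iff]
  obtain ⟨c, hc, hfc⟩ := intermediate_value_Ioo huv.le hf ⟨hfu, hfv⟩
  obtain ⟨d, hd, hgd⟩ := intermediate_value_Ioo (θ.monotone huv.le) hg ⟨hgu, hgv⟩
  obtain ⟨ρ, hρc, hρ⟩ := exists_orderIso_apply_eq (θ.strictMono.mapsTo_Ioo hc) hd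
  have hηθ : ∀ y ∉ Ioo u v, θ.trans ρ y = θ y := fun y hy =>
    hρ _ fun h => hy ⟨θ.lt_iff_lt.1 h.1, θ.lt_iff_lt.1 h.2⟩
  have hη : MapsTo (θ.trans ρ) (Icc u v) (Icc (θ u) (θ v)) := by
    rw [← hηθ u (by simp), ← hηθ v (by simp)]
    exact (θ.trans ρ).monotone.mapsTo_Icc
  exact ⟨θ.trans ρ, hηθ, fun y hy => sign_eq_of_strictMonoOn_of_eq_zero hfm hgm hη
    (Ioo_subset_Icc_self hc) (Ioo_subset_Icc_self hy) hfc ((congrArg g hρc).trans hgd)⟩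

theorem strictMonoOn_eval_of_derivative_pos {p : ℝ[X]} {u v : ℝ}
    (h : ∀ y ∈ Ioo u v, 0 < p.derivative.eval y) : StrictMonoOn (fun y => p.eval y) (Icc u v) :=
  strictMonoOn_of_deriv_pos (convex_Icc u v) p.continuous.continuousOn fun y hy => by
    rw [interior_Icc] at hy
    simpa using h y hy

/-- The order isomorphism `θ` of the line carries the sign of `p` at each point to the sign of
`p'` at the image point. -/
def SignMatch (θ : ℝ ≃o ℝ) (p p' : ℝ[X]) : Prop :=
  ∀ y, sign (p.eval y) = sign (p'.eval (θ y))

theorem SignMatch.neg {θ : ℝ ≃o ℝ} {p p' : ℝ[X]} (h : SignMatch θ p p') :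
    SignMatch θ (-p) (-p') := fun y => by
  simpa [Left.sign_neg] using h y

theorem SignMatch.sign_eq_of_gap {θ : ℝ ≃o ℝ} {p p' : ℝ[X]} (h : SignMatch θ p p') {u v : ℝ}
    (hne : ∀ y ∈ Ioo u v, p.eval y ≠ 0) {y t : ℝ} (hy : y ∈ Ioo u v)
    (ht : t ∈ Ioo (θ u) (θ v)) : sign (p.eval y) = sign (p'.eval t) := by
  have ht' : θ.symm t ∈ Ioo u v := ⟨θ.lt_symm_apply.2 ht.1, θ.symm_apply_lt.2 ht.2⟩
  rw [← θ.apply_symm_apply t, ← h]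
  exact sign_eval_eq_of_ordConnected ordConnected_Ioo hne hy ht'

theorem SignMatch.exists_orderIso_sign_eq_of_gap {θ : ℝ ≃o ℝ} {p p' : ℝ[X]}
    (hd : SignMatch θ p.derivative p'.derivative) {u v : ℝ} (huv : u < v)
    (hne : ∀ y ∈ Ioo u v, p.derivative.eval y ≠ 0)
    (hu : sign (p.eval u) = sign (p'.eval (θ u))) (hv : sign (p.eval v) = sign (p'.eval (θ v))) :
    ∃ η : ℝ ≃o ℝ, (∀ y ∉ Ioo u v, η y = θ y) ∧
      ∀ y ∈ Ioo u v, sign (p.eval y) = sign (p'.eval (η y)) := by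
  obtain ⟨m, hm⟩ : (Ioo u v).Nonempty := nonempty_Ioo.2 huv
  wlog hpos : 0 < p.derivative.eval m generalizing p p'
  · have hneg : 0 < (-p).derivative.eval m := by
      simpa using (not_lt.1 hpos).lt_of_ne (hne m hm)
    simpa [Left.sign_neg] using this (p := -p) (p' := -p') (by simpa using hd.neg)
      (by simpa using hne) (by simpa [Left.sign_neg] using hu)
      (by simpa [Left.sign_neg] using hv) hneg
  have hp : ∀ y ∈ Ioo u v, 0 < p.derivative.eval y := fun y hy => by
    rwa [← sign_eq_one_iff, sign_eval_eq_of_ordConnected ordConnected_Ioo hne hy hm,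
      sign_eq_one_iff]
  have hp' : ∀ t ∈ Ioo (θ u) (θ v), 0 < p'.derivative.eval t := fun t ht => by
    rwa [← sign_eq_one_iff, ← hd.sign_eq_of_gap hne hm ht, sign_eq_one_iff]
  exact exists_orderIso_sign_eq_of_strictMonoOn θ huv p.continuous.continuousOn
    p'.continuous.continuousOn (strictMonoOn_eval_of_derivative_pos hp)
    (strictMonoOn_eval_of_derivative_pos hp') hu hv

theorem SignMatch.exists_extension_of_finset {ι : Type*} {θ : ℝ ≃o ℝ} {Q Q' : ι → ℝ[X]}
    (hθ : ∀ i, SignMatch θ (Q i) (Q' i)) {p p' : ℝ[X]}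
    (hd : ∃ i, Q i = p.derivative ∧ Q' i = p'.derivative) {Z : Finset ℝ} (hZ : Z.Nonempty)
    (hroot : ∀ i y, (Q i).eval y = 0 → y ∈ Z)
    (hmem : ∀ y ∈ Z, sign (p.eval y) = sign (p'.eval (θ y)))
    (hlower : ∀ y ∈ lowerBounds (Z : Set ℝ), sign (p.eval y) = sign (p'.eval (θ y)))
    (hupper : ∀ y ∈ upperBounds (Z : Set ℝ), sign (p.eval y) = sign (p'.eval (θ y))) :
    ∃ η : ℝ ≃o ℝ, (∀ i, SignMatch η (Q i) (Q' i)) ∧ SignMatch η p p' := by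
  suffices h : ∃ η : ℝ ≃o ℝ, ∀ y, (∀ i, sign ((Q i).eval y) = sign ((Q' i).eval (η y))) ∧
      sign (p.eval y) = sign (p'.eval (η y)) from
    h.imp fun η hη => ⟨fun i y => (hη y).1 i, fun y => (hη y).2⟩
  refine exists_orderIso_of_gaps
    (P := fun y t => (∀ i, sign ((Q i).eval y) = sign ((Q' i).eval t)) ∧
      sign (p.eval y) = sign (p'.eval t))
    θ hZ (fun y hy => ⟨fun i => hθ i y, hmem y hy⟩) (fun y hy => ⟨fun i => hθ i y, hlower y hy⟩)
    (fun y hy => ⟨fun i => hθ i y, hupper y hy⟩) fun u hu v hv huv hgap => ?_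
  obtain ⟨i₀, hi₀, hi₀'⟩ := hd
  obtain ⟨η, hηθ, hη⟩ := SignMatch.exists_orderIso_sign_eq_of_gap (hi₀ ▸ hi₀' ▸ hθ i₀) huv
    (fun y hy h => hgap y (hroot i₀ y (hi₀ ▸ h)) hy) (hmem u hu) (hmem v hv)
  have hmaps : MapsTo η (Ioo u v) (Ioo (θ u) (θ v)) := by
    rw [← hηθ u (by simp), ← hηθ v (by simp)]
    exact η.strictMono.mapsTo_Ioo
  exact ⟨η, hηθ, fun y hy => ⟨fun i => (hθ i).sign_eq_of_gap
    (fun z hz h => hgap z (hroot i z h) hz) hy (hmaps hy), hη y hy⟩⟩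

theorem SignMatch.exists_extension {ι : Type*} [Finite ι] {θ : ℝ ≃o ℝ} {Q Q' : ι → ℝ[X]}
    (hQ : ∀ i, Q i ≠ 0) (hθ : ∀ i, SignMatch θ (Q i) (Q' i)) {p p' : ℝ[X]}
    (hd : ∃ i, Q i = p.derivative ∧ Q' i = p'.derivative)
    (hzero : ∀ i y, (Q i).eval y = 0 → sign (p.eval y) = sign (p'.eval (θ y)))
    (htop : ∀ᶠ y in atTop, sign (p.eval y) = sign (p'.eval (θ y)))
    (hbot : ∀ᶠ y in atBot, sign (p.eval y) = sign (p'.eval (θ y))) :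
    ∃ η : ℝ ≃o ℝ, (∀ i, SignMatch η (Q i) (Q' i)) ∧ SignMatch η p p' := by
  obtain ⟨a, ha⟩ := eventually_atBot.1 hbot
  obtain ⟨b, hb⟩ := eventually_atTop.1 htop
  have hfin : (insert a (insert b (⋃ i, {y | (Q i).IsRoot y}))).Finite :=
    ((finite_iUnion fun i => finite_setOfPred_isRoot (hQ i)).insert b).insert a
  refine SignMatch.exists_extension_of_finset hθ hd (Z := hfin.toFinset) ⟨a, by simp⟩
    (fun i y h => ?_) ?_ (fun y hy => ha y (hy (by simp))) (fun y hy => hb y (hy (by simp)))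
  · exact hfin.mem_toFinset.2 (.inr (.inr (mem_iUnion.2 ⟨i, h⟩)))
  · simp only [Finite.mem_toFinset, forall_mem_insert, mem_iUnion]
    exact ⟨ha a le_rfl, hb b le_rfl, fun y ⟨i, hi⟩ => hzero i y hi⟩

theorem eventually_atTop_sign_eval_eq (p : ℝ[X]) :
    ∀ᶠ y in atTop, sign (p.eval y) = sign p.leadingCoeff := by
  rcases eq_or_ne p 0 with rfl | hp
  · simp
  rcases p.natDegree.eq_zero_or_pos with hd | hd
  · rw [eq_C_of_natDegree_eq_zero hd]
    simp
  wlog hpos : 0 < p.leadingCoeff generalizing p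
  · have hneg : 0 < (-p).leadingCoeff := by
      rw [leadingCoeff_neg, neg_pos]
      exact (not_lt.1 hpos).lt_of_ne (leadingCoeff_ne_zero.2 hp)
    simpa [Left.sign_neg] using this (-p) (neg_ne_zero.2 hp) (by simpa using hd) hneg
  have htop := p.tendsto_atTop_of_leadingCoeff_nonneg (natDegree_pos_iff_degree_pos.1 hd) hpos.le
  filter_upwards [htop.eventually_gt_atTop 0] with y hy
  rw [sign_pos hy, sign_pos hpos]

theorem eventually_atBot_sign_eval_eq (p : ℝ[X]) :
    ∀ᶠ y in atBot, sign (p.eval y) = sign ((-1) ^ p.natDegree * p.leadingCoeff) := by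
  filter_upwards [tendsto_neg_atBot_atTop.eventually
    (eventually_atTop_sign_eval_eq (p.comp (-X)))] with y hy
  simpa [comp_neg_X_leadingCoeff_eq] using hy

theorem natDegree_eraseLead_lt {A : Type*} [Semiring A] {q : A[X]} (hq : 0 < q.natDegree) :
    q.eraseLead.natDegree < q.natDegree :=
  (eraseLead_natDegree_le q).trans_lt (by omega)

theorem map_eraseLead_of_map_leadingCoeff_eq_zero {A R : Type*} [Semiring A] [Semiring R]
    {φ : A →+* R} {q : A[X]} (h : φ q.leadingCoeff = 0) : q.eraseLead.map φ = q.map φ := by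
  conv_rhs => rw [← q.eraseLead_add_C_mul_X_pow, Polynomial.map_add, Polynomial.map_mul, map_C, h,
    C_0, zero_mul, add_zero]

theorem map_derivative_leadingCoeff_ne_zero {A R : Type*} [Semiring A] [Semiring R]
    [NoZeroDivisors R] [CharZero R] {φ : A →+* R} {q : A[X]} (hd : 0 < q.natDegree)
    (h : φ q.leadingCoeff ≠ 0) : φ q.derivative.leadingCoeff ≠ 0 := by
  have hcoeff : φ (q.derivative.coeff (q.natDegree - 1)) ≠ 0 := by
    rw [coeff_derivative, Nat.sub_add_cancel hd, coeff_natDegree, map_mul]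
    refine mul_ne_zero h ?_
    rw [map_add, map_natCast, map_one]
    exact Nat.cast_add_one_ne_zero _
  have hdeg : q.derivative.natDegree = q.natDegree - 1 :=
    natDegree_eq_of_le_of_coeff_ne_zero (natDegree_derivative_le q) fun h0 => hcoeff (by simp [h0])
  rwa [leadingCoeff, hdeg]

theorem natDegree_pos_of_eval_map_eq_zero {A R : Type*} [Semiring A] [Semiring R] {φ : A →+* R}
    {q : A[X]} (hφ : φ q.leadingCoeff ≠ 0) {y : R} (hy : (q.map φ).eval y = 0) :
    0 < q.natDegree := by
  refine Nat.pos_of_ne_zero fun h => hφ ?_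
  rw [eq_C_of_natDegree_eq_zero h, map_C, eval_C] at hy
  rwa [leadingCoeff, h]

section SignRemainder

variable {A : Type*} [CommRing A]

/-- A pseudo-remainder of `p` by a polynomial `q` of positive degree: its degree is less than that
of `q`, and at a zero of `q` its value is that of `p` multiplied by an even power of the leading
coefficient `c` of `q`, hence has the same sign as long as `c` does not vanish. Dividing by a
non-monic `q` is reduced to dividing by the monic polynomial `q.integralNormalization`, whose zeros
are `c` times those of `q`. -/
noncomputable def signRemainder (p q : A[X]) : A[X] :=
  C (q.leadingCoeff ^ p.natDegree) *
    (p.scaleRoots q.leadingCoeff %ₘ q.integralNormalization).comp (C q.leadingCoeff * X)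

theorem natDegree_signRemainder_lt (p : A[X]) {q : A[X]} (hq : 0 < q.natDegree) :
    (signRemainder p q).natDegree < q.natDegree := by
  have hmonic : q.integralNormalization.Monic :=
    monic_integralNormalization (ne_zero_of_natDegree_gt hq)
  have hdeg : q.integralNormalization.natDegree = q.natDegree := natDegree_integralNormalization
  calc (signRemainder p q).natDegree
    _ ≤ _ := natDegree_C_mul_le _ _
    _ ≤ (p.scaleRoots q.leadingCoeff %ₘ q.integralNormalization).natDegree * 1 :=
      natDegree_comp_le.trans (Nat.mul_le_mul_left _
        ((natDegree_C_mul_le _ _).trans natDegree_X_le))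
    _ < q.integralNormalization.natDegree := by
      rw [mul_one]
      exact natDegree_modByMonic_lt _ hmonic fun h => by simp [h, hq.ne] at hdeg
    _ = q.natDegree := hdeg

theorem sign_eval_map_signRemainder {R : Type*} [CommRing R] [LinearOrder R]
    [IsStrictOrderedRing R] {φ : A →+* R} (p : A[X]) {q : A[X]} (hφ : φ q.leadingCoeff ≠ 0) {y : R}
    (hy : (q.map φ).eval y = 0) :
    sign (((signRemainder p q).map φ).eval y) = sign ((p.map φ).eval y) := by
  have hq := natDegree_pos_of_eval_map_eq_zero hφ hy
  rw [eval_map] at hy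
  have hroot : eval₂ φ (φ q.leadingCoeff * y) q.integralNormalization = 0 := by
    rw [integralNormalization_eval₂_leadingCoeff_mul hq, hy, mul_zero]
  have heval : eval₂ φ y (signRemainder p q) =
      (φ q.leadingCoeff ^ p.natDegree) ^ 2 * eval₂ φ y p := by
    rw [signRemainder, eval₂_mul, eval₂_C, eval₂_comp, eval₂_mul, eval₂_C, eval₂_X,
      eval₂_modByMonic_eq_self_of_root hroot, scaleRoots_eval₂_mul, map_pow]
    ring
  rw [eval_map, eval_map, heval, sign_mul, sign_pos (by positivity), one_mul]

/-- A set of polynomials is remainder closed if it is stable under removing leading terms, under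
derivation and under `signRemainder`, as far as these lower a positive degree. -/
def IsRemainderClosed (s : Set A[X]) : Prop :=
  ∀ q ∈ s, 0 < q.natDegree → q.eraseLead ∈ s ∧ q.derivative ∈ s ∧
    ∀ p ∈ s, q.natDegree ≤ p.natDegree → signRemainder p q ∈ s

/-- Membership in the smallest remainder closed set of polynomials containing `F`. -/
inductive RemainderClosure (F : Set A[X]) : A[X] → Prop
  | basic {p : A[X]} : p ∈ F → RemainderClosure F p
  | eraseLead {q : A[X]} : RemainderClosure F q → 0 < q.natDegree →
      RemainderClosure F q.eraseLead
  | derivative {q : A[X]} : RemainderClosure F q → 0 < q.natDegree →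
      RemainderClosure F q.derivative
  | signRemainder {p q : A[X]} : RemainderClosure F p → RemainderClosure F q → 0 < q.natDegree →
      q.natDegree ≤ p.natDegree → RemainderClosure F (signRemainder p q)

theorem isRemainderClosed_remainderClosure (F : Set A[X]) :
    IsRemainderClosed {p | RemainderClosure F p} := fun _ hq hd =>
  ⟨.eraseLead hq hd, .derivative hq hd, fun _ hp h => .signRemainder hp hq hd h⟩

theorem finite_remainderClosure {F : Set A[X]} (hF : F.Finite) :
    {p | RemainderClosure F p}.Finite := by
  obtain ⟨D, hD⟩ : ∃ D, ∀ p ∈ F, p.natDegree < D := by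
    obtain ⟨D, hD⟩ := (hF.image natDegree).bddAbove
    exact ⟨D + 1, fun p hp => Nat.lt_succ_of_le (hD (mem_image_of_mem _ hp))⟩
  have hlt : ∀ p, RemainderClosure F p → p.natDegree < D := fun p hp => by
    induction hp with
    | basic hp => exact hD _ hp
    | eraseLead _ hd ih => exact (natDegree_eraseLead_lt hd).trans ih
    | derivative _ hd ih => exact (natDegree_derivative_lt hd.ne').trans ih
    | signRemainder _ _ hd _ _ ih => exact (natDegree_signRemainder_lt _ hd).trans ih
  -- Every polynomial added by the closure has smaller degree than all its operands, so there are
  -- finitely many of each degree, by descending induction on the degree.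
  suffices key : ∀ j, {p | RemainderClosure F p ∧ D ≤ p.natDegree + j}.Finite from
    (key D).subset fun p hp => ⟨hp, Nat.le_add_left _ _⟩
  intro j
  induction j with
  | zero => exact finite_empty.subset fun p hp => (hlt p hp.1).not_ge hp.2
  | succ j ih =>
    set G := {p | RemainderClosure F p ∧ D ≤ p.natDegree + j}
    refine (hF.union ((ih.image eraseLead).union ((ih.image derivative).union
      (ih.image2 signRemainder ih)))).subset ?_
    have hmem : ∀ {q r : A[X]}, RemainderClosure F q → r.natDegree < q.natDegree →
      D ≤ r.natDegree + (j + 1) → q ∈ G := fun hq hr hj => ⟨hq, by omega⟩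
    rintro r ⟨hr, hj⟩
    cases hr with
    | basic hp => exact .inl hp
    | eraseLead hq hd => exact .inr (.inl ⟨_, hmem hq (natDegree_eraseLead_lt hd) hj, rfl⟩)
    | derivative hq hd =>
      exact .inr (.inr (.inl ⟨_, hmem hq (natDegree_derivative_lt hd.ne') hj, rfl⟩))
    | @signRemainder p q hp hq hd hpq =>
      have hr := natDegree_signRemainder_lt p hd
      exact .inr (.inr (.inr ⟨_, hmem hp (hr.trans_le hpq) hj, _, hmem hq hr hj, rfl⟩))

theorem signMatch_map_of_natDegree_eq_zero {φ φ' : A →+* ℝ} {p : A[X]} (hp : p.natDegree = 0)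
    (hφ : sign (φ p.leadingCoeff) = sign (φ' p.leadingCoeff)) (θ : ℝ ≃o ℝ) :
    SignMatch θ (p.map φ) (p.map φ') := fun y => by
  rw [leadingCoeff, hp] at hφ
  rw [eq_C_of_natDegree_eq_zero hp]
  simpa using hφ

theorem IsRemainderClosed.signMatch_of_leadingCoeff_ne_zero {s : Set A[X]}
    (hs : IsRemainderClosed s) {φ φ' : A →+* ℝ}
    (hφ : ∀ q ∈ s, sign (φ q.leadingCoeff) = sign (φ' q.leadingCoeff)) {θ : ℝ ≃o ℝ}
    (hθ : ∀ q ∈ s, φ q.leadingCoeff ≠ 0 → SignMatch θ (q.map φ) (q.map φ')) :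
    ∀ q ∈ s, SignMatch θ (q.map φ) (q.map φ') := by
  intro q hq
  induction hn : q.natDegree using Nat.strong_induction_on generalizing q with
  | _ n ih =>
  subst hn
  by_cases h0 : φ q.leadingCoeff = 0
  · have h0' : φ' q.leadingCoeff = 0 := by
      rw [← sign_eq_zero_iff, ← hφ q hq, h0, sign_zero]
    rcases q.natDegree.eq_zero_or_pos with hd | hd
    · exact signMatch_map_of_natDegree_eq_zero hd (hφ q hq) θ
    · rw [← map_eraseLead_of_map_leadingCoeff_eq_zero h0,
        ← map_eraseLead_of_map_leadingCoeff_eq_zero h0']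
      exact ih _ (natDegree_eraseLead_lt hd) _ (hs q hq hd).1 rfl
  · exact hθ q hq h0

theorem IsRemainderClosed.of_insert {a : A[X]} {s : Set A[X]} (hs : IsRemainderClosed (insert a s))
    (ha : ∀ q ∈ s, q.natDegree ≤ a.natDegree) : IsRemainderClosed s := by
  intro q hq hd
  have hmem : ∀ r ∈ insert a s, r.natDegree < q.natDegree → r ∈ s := fun r hr hlt =>
    mem_of_mem_insert_of_ne hr fun h => (h ▸ hlt).not_ge (ha q hq)
  obtain ⟨h1, h2, h3⟩ := hs q (mem_insert_of_mem a hq) hd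
  exact ⟨hmem _ h1 (natDegree_eraseLead_lt hd), hmem _ h2 (natDegree_derivative_lt hd.ne'),
    fun p hp hqp => hmem _ (h3 p (mem_insert_of_mem a hp) hqp) (natDegree_signRemainder_lt p hd)⟩

theorem sign_eval_map_eq_of_root {φ φ' : A →+* ℝ} {θ : ℝ ≃o ℝ} {p q : A[X]}
    (hφ : φ q.leadingCoeff ≠ 0) (hφφ' : sign (φ q.leadingCoeff) = sign (φ' q.leadingCoeff))
    (hq : SignMatch θ (q.map φ) (q.map φ'))
    (hr : SignMatch θ ((signRemainder p q).map φ) ((signRemainder p q).map φ')) {y : ℝ}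
    (hy : (q.map φ).eval y = 0) :
    sign ((p.map φ).eval y) = sign ((p.map φ').eval (θ y)) := by
  have hφ' : φ' q.leadingCoeff ≠ 0 := by rwa [← sign_ne_zero, ← hφφ', sign_ne_zero]
  have hy' : (q.map φ').eval (θ y) = 0 := by
    rw [← sign_eq_zero_iff, ← hq y, hy, sign_zero]
  rw [← sign_eval_map_signRemainder p hφ hy, ← sign_eval_map_signRemainder p hφ' hy', hr y]

theorem exists_signMatch_map_insert {a : A[X]} {s : Set A[X]} (hs : s.Finite) {φ φ' : A →+* ℝ}
    (hs0 : ∀ q ∈ s, φ q.leadingCoeff ≠ 0) (ha0 : φ a.leadingCoeff ≠ 0)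
    (ha : sign (φ a.leadingCoeff) = sign (φ' a.leadingCoeff)) (hda : a.derivative ∈ s)
    {θ : ℝ ≃o ℝ} (hθ : ∀ q ∈ s, SignMatch θ (q.map φ) (q.map φ'))
    (hzero : ∀ q ∈ s, ∀ y, (q.map φ).eval y = 0 →
      sign ((a.map φ).eval y) = sign ((a.map φ').eval (θ y))) :
    ∃ η : ℝ ≃o ℝ, ∀ q ∈ insert a s, SignMatch η (q.map φ) (q.map φ') := by
  have ha0' : φ' a.leadingCoeff ≠ 0 := by rwa [← sign_ne_zero, ← ha, sign_ne_zero]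
  have := hs.to_subtype
  obtain ⟨η, hη, hηa⟩ := SignMatch.exists_extension (θ := θ) (p := a.map φ) (p' := a.map φ')
    (Q := fun q : s => q.1.map φ) (Q' := fun q : s => q.1.map φ')
    (fun q h => hs0 q q.2 (by simpa using congrArg (coeff · q.1.natDegree) h)) (fun q => hθ q q.2)
    ⟨⟨_, hda⟩, by simp [derivative_map]⟩ (fun q => hzero q q.2) (by
      filter_upwards [eventually_atTop_sign_eval_eq (a.map φ),
        θ.tendsto_atTop.eventually (eventually_atTop_sign_eval_eq (a.map φ'))] with y hy hy'
      rw [hy, hy', leadingCoeff_map_of_leadingCoeff_ne_zero φ ha0,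
        leadingCoeff_map_of_leadingCoeff_ne_zero φ' ha0', ha]) (by
      filter_upwards [eventually_atBot_sign_eval_eq (a.map φ),
        θ.tendsto_atBot.eventually (eventually_atBot_sign_eval_eq (a.map φ'))] with y hy hy'
      rw [hy, hy', leadingCoeff_map_of_leadingCoeff_ne_zero φ ha0,
        leadingCoeff_map_of_leadingCoeff_ne_zero φ' ha0', sign_mul, sign_mul, ha,
        natDegree_map_of_leadingCoeff_ne_zero φ ha0, natDegree_map_of_leadingCoeff_ne_zero φ' ha0'])
  exact ⟨η, forall_mem_insert.2 ⟨hηa, fun q hq => hη ⟨q, hq⟩⟩⟩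

theorem IsRemainderClosed.exists_signMatch_insert {a : A[X]} {s : Set A[X]} (hsf : s.Finite)
    (hs : IsRemainderClosed (insert a s)) (ha : ∀ q ∈ s, q.natDegree ≤ a.natDegree)
    {φ φ' : A →+* ℝ}
    (hφ : ∀ q ∈ insert a s, sign (φ q.leadingCoeff) = sign (φ' q.leadingCoeff)) {θ : ℝ ≃o ℝ}
    (hθ : ∀ q ∈ s, SignMatch θ (q.map φ) (q.map φ')) :
    ∃ η : ℝ ≃o ℝ, ∀ q ∈ insert a s, SignMatch η (q.map φ) (q.map φ') := by
  suffices h : ∃ η : ℝ ≃o ℝ, ∀ q ∈ insert a s, φ q.leadingCoeff ≠ 0 →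
      SignMatch η (q.map φ) (q.map φ') from
    h.imp fun η => hs.signMatch_of_leadingCoeff_ne_zero hφ
  by_cases ha0 : φ a.leadingCoeff = 0
  · exact ⟨θ, forall_mem_insert.2 ⟨fun h => absurd ha0 h, fun q hq _ => hθ q hq⟩⟩
  have haφ := hφ a (mem_insert a s)
  rcases a.natDegree.eq_zero_or_pos with hd | hd
  · exact ⟨θ, forall_mem_insert.2 ⟨fun _ => signMatch_map_of_natDegree_eq_zero hd haφ θ,
      fun q hq _ => hθ q hq⟩⟩
  have hmem : ∀ r ∈ insert a s, r.natDegree < a.natDegree → r ∈ s := fun r hr hlt =>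
    mem_of_mem_insert_of_ne hr fun h => hlt.ne (congrArg _ h)
  have hzero : ∀ q ∈ s, φ q.leadingCoeff ≠ 0 → ∀ y, (q.map φ).eval y = 0 →
      sign ((a.map φ).eval y) = sign ((a.map φ').eval (θ y)) := by
    intro q hq hq0 y hy
    have hqd : 0 < q.natDegree := natDegree_pos_of_eval_map_eq_zero hq0 hy
    have hr : signRemainder a q ∈ s :=
      hmem _ ((hs q (mem_insert_of_mem a hq) hqd).2.2 a (mem_insert a s) (ha q hq))
        ((natDegree_signRemainder_lt a hqd).trans_le (ha q hq))
    exact sign_eval_map_eq_of_root hq0 (hφ q (mem_insert_of_mem a hq)) (hθ q hq) (hθ _ hr) hy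
  have hda : a.derivative ∈ s :=
    hmem _ (hs a (mem_insert a s) hd).2.1 (natDegree_derivative_lt hd.ne')
  obtain ⟨η, hη⟩ := exists_signMatch_map_insert (s := {q ∈ s | φ q.leadingCoeff ≠ 0})
    (hsf.subset (sep_subset _ _)) (fun q hq => hq.2) ha0 haφ
    ⟨hda, map_derivative_leadingCoeff_ne_zero hd ha0⟩ (fun q hq => hθ q hq.1)
    (fun q hq => hzero q hq.1 hq.2)
  exact ⟨η, fun q hq h => hη q (hq.imp_right fun hq => ⟨hq, h⟩)⟩

theorem IsRemainderClosed.exists_signMatch {s : Finset A[X]}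
    (hs : IsRemainderClosed (s : Set A[X])) {φ φ' : A →+* ℝ}
    (hφ : ∀ q ∈ s, sign (φ q.leadingCoeff) = sign (φ' q.leadingCoeff)) :
    ∃ θ : ℝ ≃o ℝ, ∀ q ∈ s, SignMatch θ (q.map φ) (q.map φ') := by
  classical
  induction s using Finset.induction_on_max_value (natDegree : A[X] → ℕ) with
  | empty => exact ⟨OrderIso.refl ℝ, by simp⟩
  | insert a s _ ha ih =>
    rw [Finset.coe_insert] at hs
    obtain ⟨θ, hθ⟩ := ih (hs.of_insert ha) fun q hq => hφ q (Finset.mem_insert_of_mem hq)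
    obtain ⟨η, hη⟩ := hs.exists_signMatch_insert s.finite_toSet ha
      (fun q hq => hφ q (by simpa using hq)) hθ
    exact ⟨η, fun q hq => hη q (by simpa using hq)⟩

theorem exists_finite_forall_exists_signMatch {F : Set A[X]} (hF : F.Finite) :
    ∃ K : Set A, K.Finite ∧ ∀ φ φ' : A →+* ℝ, (∀ c ∈ K, sign (φ c) = sign (φ' c)) →
      ∃ θ : ℝ ≃o ℝ, ∀ p ∈ F, SignMatch θ (p.map φ) (p.map φ') := by
  have hfin := finite_remainderClosure hF
  refine ⟨leadingCoeff '' {p | RemainderClosure F p}, hfin.image _, fun φ φ' h => ?_⟩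
  obtain ⟨θ, hθ⟩ := IsRemainderClosed.exists_signMatch (s := hfin.toFinset) (φ := φ) (φ' := φ')
    (by simpa using isRemainderClosed_remainderClosure F)
    fun q hq => h _ (mem_image_of_mem _ (hfin.mem_toFinset.1 hq))
  exact ⟨θ, fun p hp => hθ p (hfin.mem_toFinset.2 (.basic hp))⟩

end SignRemainder

theorem eval₂_cons_eq_eval_map_finSuccEquiv {A R : Type*} [CommSemiring A] [CommSemiring R] {n : ℕ}
    (φ : A →+* R) (y : R) (z : Fin n → R) (p : MvPolynomial (Fin (n + 1)) A) :
    p.eval₂ φ (Fin.cons y z) =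
      ((MvPolynomial.finSuccEquiv A n p).map (MvPolynomial.eval₂Hom φ z)).eval y := by
  induction p using MvPolynomial.induction_on with
  | C a => simp [MvPolynomial.finSuccEquiv_apply]
  | add p q hp hq => rw [MvPolynomial.eval₂_add, hp, hq, map_add, Polynomial.map_add, eval_add]
  | mul_X p i hp =>
    rw [MvPolynomial.eval₂_mul, hp, map_mul, Polynomial.map_mul, eval_mul, MvPolynomial.eval₂_X]
    cases i using Fin.cases <;>
      simp [MvPolynomial.finSuccEquiv_X_zero, MvPolynomial.finSuccEquiv_X_succ]

theorem exists_finite_forall_sign_eval₂_eq {n : ℕ} {A : Type*} [CommRing A]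
    {F : Set (MvPolynomial (Fin n) A)} (hF : F.Finite) :
    ∃ K : Set A, K.Finite ∧ ∀ φ φ' : A →+* ℝ, (∀ c ∈ K, sign (φ c) = sign (φ' c)) →
      ∀ x : Fin n → ℝ, ∃ x' : Fin n → ℝ, ∀ p ∈ F, sign (p.eval₂ φ x) = sign (p.eval₂ φ' x') := by
  induction n generalizing A with
  | zero =>
    refine ⟨MvPolynomial.constantCoeff '' F, hF.image _, fun φ φ' h x => ⟨x, fun p hp => ?_⟩⟩
    rw [MvPolynomial.eq_C_of_isEmpty p, MvPolynomial.eval₂_C, MvPolynomial.eval₂_C]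
    exact h _ (mem_image_of_mem _ hp)
  | succ n ih =>
    obtain ⟨K, hK, hKF⟩ :=
      exists_finite_forall_exists_signMatch (hF.image (MvPolynomial.finSuccEquiv A n))
    obtain ⟨L, hL, hLK⟩ := ih hK
    refine ⟨L, hL, fun φ φ' h x => ?_⟩
    obtain ⟨z, hz⟩ := hLK φ φ' h (Fin.tail x)
    obtain ⟨θ, hθ⟩ := hKF (MvPolynomial.eval₂Hom φ (Fin.tail x)) (MvPolynomial.eval₂Hom φ' z) hz
    refine ⟨Fin.cons (θ (x 0)) z, fun p hp => ?_⟩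
    have := hθ _ (mem_image_of_mem _ hp) (x 0)
    rwa [← eval₂_cons_eq_eval_map_finSuccEquiv, ← eval₂_cons_eq_eval_map_finSuccEquiv,
      Fin.cons_self_tail] at this

/-- Membership in `S` depends only on the signs of the functions in `F`. -/
def SignDetermined {X : Type*} (F : Set (X → ℝ)) (S : Set X) : Prop :=
  ∀ ⦃x x'⦄, (∀ f ∈ F, sign (f x) = sign (f x')) → x ∈ S → x' ∈ S

theorem signDetermined_iUnion_setOf_pos_eq_zero {X ι : Type*} {κ μ : ι → Type*}
    (F : (u : ι) → κ u → X → ℝ) (G : (u : ι) → μ u → X → ℝ) :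
    SignDetermined (⋃ u, range (F u) ∪ range (G u))
      (⋃ u, {x | (∀ i, 0 < F u i x) ∧ ∀ k, G u k x = 0}) := by
  intro x x' hxx' hx
  obtain ⟨u, hF, hG⟩ := mem_iUnion.1 hx
  refine mem_iUnion.2 ⟨u, fun i => ?_, fun k => ?_⟩
  · rw [← sign_eq_one_iff, ← hxx' _ (mem_iUnion.2 ⟨u, .inl ⟨i, rfl⟩⟩), sign_eq_one_iff]
    exact hF i
  · rw [← sign_eq_zero_iff, ← hxx' _ (mem_iUnion.2 ⟨u, .inr ⟨k, rfl⟩⟩), sign_eq_zero_iff]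
    exact hG k

theorem eval₂_evalRingHom_map_C {R σ : Type*} [CommSemiring R] (t : R) (x : σ → R)
    (p : MvPolynomial σ R) :
    (MvPolynomial.map C p).eval₂ (evalRingHom t) x = MvPolynomial.eval x p := by
  rw [MvPolynomial.eval₂_map, show (evalRingHom t).comp C = RingHom.id R by ext; simp]
  rfl

theorem exists_signDetermined_image {n : ℕ} {F : Set (MvPolynomial (Fin n) ℝ)} (hF : F.Finite)
    {S : Set (Fin n → ℝ)} (hS : SignDetermined ((fun p x => MvPolynomial.eval x p) '' F) S)
    (f : MvPolynomial (Fin n) ℝ) :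
    ∃ K : Set ℝ[X], K.Finite ∧
      SignDetermined ((fun q t => q.eval t) '' K) ((fun x => MvPolynomial.eval x f) '' S) := by
  obtain ⟨K, hK, hKF⟩ := exists_finite_forall_sign_eval₂_eq
    ((hF.image (MvPolynomial.map (C : ℝ →+* ℝ[X]))).insert
      (MvPolynomial.map C f - MvPolynomial.C X))
  refine ⟨K, hK, ?_⟩
  rintro _ t' htt' ⟨x, hx, rfl⟩
  obtain ⟨x', hx'⟩ := hKF (evalRingHom _) (evalRingHom t')
    (fun q hq => htt' _ (mem_image_of_mem _ hq)) x
  have hfx' : MvPolynomial.eval x' f = t' := by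
    have := hx' _ (mem_insert _ _)
    simp only [MvPolynomial.eval₂_sub, MvPolynomial.eval₂_C, eval₂_evalRingHom_map_C,
      coe_evalRingHom, eval_X, sub_self, sign_zero] at this
    exact sub_eq_zero.1 (sign_eq_zero_iff.1 this.symm)
  refine ⟨x', hS ?_ hx, hfx'⟩
  rintro _ ⟨p, hp, rfl⟩
  simpa only [eval₂_evalRingHom_map_C] using hx' _ (mem_insert_of_mem _ (mem_image_of_mem _ hp))

theorem sign_eval_eq_of_forall_sign_sub_eq {q : ℝ[X]} {t t' : ℝ}
    (h : ∀ z ∈ q.roots, sign (t - z) = sign (t' - z)) : sign (q.eval t) = sign (q.eval t') := by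
  wlog htt' : t ≤ t' generalizing t t'
  · exact (this (fun z hz => (h z hz).symm) (le_of_not_ge htt')).symm
  rcases eq_or_ne q 0 with rfl | hq
  · simp
  by_cases hroot : ∃ z ∈ Icc t t', q.eval z = 0
  · obtain ⟨z, ⟨htz, hzt'⟩, hz⟩ := hroot
    have hsign := h z ((mem_roots hq).2 hz)
    rcases htz.eq_or_lt with rfl | htz
    · rw [sub_self, sign_zero, eq_comm, sign_eq_zero_iff, sub_eq_zero] at hsign
      rw [hsign]
    · rw [sign_neg (sub_neg.2 htz), eq_comm, sign_eq_neg_one_iff, sub_neg] at hsign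
      exact absurd hzt' hsign.not_ge
  · exact sign_eval_eq_of_ordConnected ordConnected_Icc (fun z hz h0 => hroot ⟨z, hz, h0⟩)
      (left_mem_Icc.2 htt') (right_mem_Icc.2 htt')

theorem SignDetermined.exists_eq_iUnion_ordConnected {K : Set ℝ[X]} (hK : K.Finite) {E : Set ℝ}
    (hE : SignDetermined ((fun q t => q.eval t) '' K) E) :
    ∃ (w : ℕ) (J : Fin w → Set ℝ), (∀ j, (J j).OrdConnected) ∧ E = ⋃ j, J j := by
  have hZ : {z | ∃ q ∈ K, z ∈ q.roots}.Finite :=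
    (hK.biUnion fun q _ => q.roots.toFinset.finite_toSet).subset fun z ⟨q, hq, hz⟩ =>
      mem_biUnion hq (Multiset.mem_toFinset.2 hz)
  let pos : ℝ → {z | ∃ q ∈ K, z ∈ q.roots} → SignType := fun t z => sign (t - z)
  have hpos : Monotone pos := fun t t' h z => SignType.sign.monotone (sub_le_sub_right h z)
  have hmem : ∀ t t', pos t = pos t' → t ∈ E → t' ∈ E := by
    intro t t' h
    refine @hE _ _ ?_
    rintro _ ⟨q, hq, rfl⟩
    exact sign_eval_eq_of_forall_sign_sub_eq fun z hz => congrFun h ⟨z, q, hq, hz⟩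
  have := hZ.to_subtype
  obtain ⟨w, σ, -, hσ⟩ := (pos '' E).toFinite.fin_param
  refine ⟨w, fun j => pos ⁻¹' {σ j}, fun j => ordConnected_singleton.preimage_mono hpos, ?_⟩
  rw [← preimage_iUnion, iUnion_singleton_eq_range, hσ]
  refine (subset_preimage_image pos E).antisymm ?_
  rintro t' ⟨t, ht, h⟩
  exact hmem t t' h ht

/-- `B` is cut out by finitely many weak inequalities `0 ≤ gᵢ(t)` and equations `hᵢ(t) = 0`, where
the `gᵢ` have only simple complex roots and, pairwise, no complex root in common. -/
def IsBasicClosed (B : Set ℝ) : Prop :=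
  ∃ (v k : ℕ) (g : Fin v → ℝ[X]) (h : Fin k → ℝ[X]),
    B = {t : ℝ | (∀ i, 0 ≤ (g i).eval t) ∧ ∀ i, (h i).eval t = 0} ∧
    (∀ i, HasOnlySimpleComplexRoots (g i)) ∧
    ∀ i i', i ≠ i' → ¬ HasCommonComplexRoot (g i) (g i')

theorem hasOnlySimpleComplexRoots_of_natDegree_eq_one {p : ℝ[X]} (hp : p.natDegree = 1) :
    HasOnlySimpleComplexRoots p := by
  classical
  refine ⟨ne_zero_of_natDegree_gt (n := 0) (by lia), fun a => ?_⟩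
  rw [← count_roots]
  calc _ ≤ Multiset.card (p.map (algebraMap ℝ ℂ)).roots := Multiset.count_le_card _ _
    _ ≤ (p.map (algebraMap ℝ ℂ)).natDegree := card_roots' _
    _ = 1 := by rw [natDegree_map, hp]

theorem hasOnlySimpleComplexRoots_X_sub_C (a : ℝ) : HasOnlySimpleComplexRoots (X - C a) :=
  hasOnlySimpleComplexRoots_of_natDegree_eq_one (natDegree_X_sub_C a)

theorem hasOnlySimpleComplexRoots_C_sub_X (a : ℝ) : HasOnlySimpleComplexRoots (C a - X) :=
  hasOnlySimpleComplexRoots_of_natDegree_eq_one <| by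
    rw [← neg_sub, natDegree_neg, natDegree_X_sub_C]

theorem isBasicClosed_empty : IsBasicClosed ∅ :=
  ⟨0, 1, ![], ![1], by ext; simp, nofun, nofun⟩

theorem isBasicClosed_univ : IsBasicClosed univ :=
  ⟨0, 0, ![], ![], by ext; simp, nofun, nofun⟩

theorem isBasicClosed_singleton (a : ℝ) : IsBasicClosed {a} :=
  ⟨0, 1, ![], ![X - C a], by ext; simp [sub_eq_zero], nofun, nofun⟩

theorem isBasicClosed_setOf_eval_nonneg {g : ℝ[X]} (hg : HasOnlySimpleComplexRoots g) :
    IsBasicClosed {t | 0 ≤ g.eval t} :=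
  ⟨1, 0, ![g], ![], by simp, by simpa using hg, fun i j h => absurd (Subsingleton.elim i j) h⟩

theorem isBasicClosed_Ici (a : ℝ) : IsBasicClosed (Ici a) := by
  simpa [Ici] using isBasicClosed_setOf_eval_nonneg (hasOnlySimpleComplexRoots_X_sub_C a)

theorem isBasicClosed_Iic (a : ℝ) : IsBasicClosed (Iic a) := by
  simpa [Iic] using isBasicClosed_setOf_eval_nonneg (hasOnlySimpleComplexRoots_C_sub_X a)

theorem HasCommonComplexRoot.symm {p q : ℝ[X]} :
    HasCommonComplexRoot p q → HasCommonComplexRoot q p :=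
  fun ⟨z, hp, hq⟩ => ⟨z, hq, hp⟩

theorem isBasicClosed_Icc (a b : ℝ) : IsBasicClosed (Icc a b) := by
  rcases lt_trichotomy a b with hab | rfl | hab
  · have hdisj : ¬ HasCommonComplexRoot (X - C a) (C b - X) := by
      rintro ⟨z, ha, hb⟩
      simp only [map_sub, aeval_X, aeval_C, Complex.coe_algebraMap, sub_eq_zero] at ha hb
      exact hab.ne (by exact_mod_cast ha.symm.trans hb.symm)
    refine ⟨2, 0, ![X - C a, C b - X], ![], by ext; simp [Fin.forall_fin_two], ?_, ?_⟩
    · simp [Fin.forall_fin_two, hasOnlySimpleComplexRoots_X_sub_C,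
        hasOnlySimpleComplexRoots_C_sub_X]
    · simpa [Fin.forall_fin_two] using ⟨hdisj, fun h => hdisj h.symm⟩
  · rw [Icc_self]
    exact isBasicClosed_singleton a
  · rw [Icc_eq_empty hab.not_ge]
    exact isBasicClosed_empty

theorem isBasicClosed_closure_of_ordConnected {s : Set ℝ} (hs : s.OrdConnected) :
    IsBasicClosed (closure s) := by
  have hs := hs.isPreconnected.mem_intervals
  generalize sInf s = a at hs
  generalize sSup s = b at hs
  simp only [mem_insert_iff, mem_singleton_iff] at hs
  rcases eq_or_ne a b with rfl | hab <;>
    rcases hs with rfl | rfl | rfl | rfl | rfl | rfl | rfl | rfl | rfl | rfl <;>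
      simp [*, isBasicClosed_empty, isBasicClosed_univ, isBasicClosed_singleton, isBasicClosed_Ici,
        isBasicClosed_Iic, isBasicClosed_Icc]

/-- For a polynomial `f` on `ℝⁿ` and a semi-algebraic set `S ⊆ ℝⁿ`
(a finite union of elementary semi-algebraic sets), the closure of the image `f(S)`
is a finite union of sets `{t : g_{1,j}(t) ≥ 0, …, g_{v_j,j}(t) ≥ 0,
h_{1,j}(t) = ⋯ = h_{k_j,j}(t) = 0}` where each `g_{i,j}` is squarefree and, for each
`j`, no two distinct `g_{i,j}` have a common complex root. -/
theorem closure_image_semialgebraic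
    (n N : ℕ) (f : MvPolynomial (Fin n) ℝ)
    (mP lQ : Fin N → ℕ)
    (P : (u : Fin N) → Fin (mP u) → MvPolynomial (Fin n) ℝ)
    (Q : (u : Fin N) → Fin (lQ u) → MvPolynomial (Fin n) ℝ)
    (S : Set (Fin n → ℝ))
    (hS : S = ⋃ u, {x | (∀ i, 0 < MvPolynomial.eval x (P u i)) ∧
        ∀ k, MvPolynomial.eval x (Q u k) = 0}) :
    ∃ (w : ℕ) (v kk : Fin w → ℕ)
      (g : (j : Fin w) → Fin (v j) → Polynomial ℝ)
      (h : (j : Fin w) → Fin (kk j) → Polynomial ℝ),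
      (closure ((fun x => MvPolynomial.eval x f) '' S)
        = ⋃ j, {t : ℝ | (∀ i, 0 ≤ (g j i).eval t) ∧ ∀ i, (h j i).eval t = 0}) ∧
      (∀ j i, HasOnlySimpleComplexRoots (g j i)) ∧
      ∀ j, ∀ i i', i ≠ i' → ¬ HasCommonComplexRoot (g j i) (g j i') := by
  have hdet : SignDetermined ((fun p x => MvPolynomial.eval x p) ''
      ⋃ u, range (P u) ∪ range (Q u)) S := by
    simpa only [hS, image_iUnion, image_union, ← range_comp, Function.comp_def] using
      signDetermined_iUnion_setOf_pos_eq_zero (fun u i x => MvPolynomial.eval x (P u i))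
        fun u k x => MvPolynomial.eval x (Q u k)
  obtain ⟨K, hK, hdetK⟩ := exists_signDetermined_image
    (finite_iUnion fun u => (finite_range (P u)).union (finite_range (Q u))) hdet f
  obtain ⟨w, J, hJ, hEJ⟩ := hdetK.exists_eq_iUnion_ordConnected hK
  choose v kk g h hgh hg hgg using fun j => isBasicClosed_closure_of_ordConnected (hJ j)
  refine ⟨w, v, kk, g, h, ?_, hg, hgg⟩
  rw [hEJ, closure_iUnion_of_finite]
  exact iUnion_congr hgh
end
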